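/- arXiv:0805.2830 — 5 statements merged into one kernel-verified Lean document; each statement's English description precedes it below -/
import Mathlib

section
/- Suppose gcd(det(A), p) = 1 and X_0 = 0. Then for every α ∈ ℝ^k and n ≥ 1: |P̂_n(α)|² = ∏_{j=0}^{n−1} ( Σ_{h,i ∈ ℤ^k} μ(h)μ(i) cos((2π/p)⟨h−i, ᵗA^j α⟩) ), and for every pair of vectors u, v in the support of μ this quantity is at most ∏_{j=0}^{n−1} ( 1 − 2μ(u)μ(v) + 2μ(u)μ(v) cos((2π/p)⟨u−v, ᵗA^j α⟩) ). -/
/-!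
Since `X_{n+1} = A X_n + B_n` with independent terms, the Fourier transform satisfies
`P̂_{n+1}(α) = P̂_n(ᵗA α) μ̂(α)`, so that `P̂_n(α) = ∏_{j<n} μ̂(ᵗA^j α)`. Expanding
`|μ̂(β)|² = μ̂(β) · conj μ̂(β)` as a double series and taking real parts gives
`∑ μ(h) μ(i) cos θ(h - i)`, where `θ(h) = (2π/p) ⟨h, β⟩`. When `μ ≥ 0` has mass `M`, the deficit
`M² - |μ̂(β)|²` is the double series of the nonnegative terms `μ(h) μ(i) (1 - cos θ(h - i))`, which
is bounded below by its terms at `(u, v)` and `(v, u)`.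
-/

open scoped BigOperators
open Matrix

noncomputable section

/-- Distribution of the chain `X₀ = 0`, `X_{n+1} = A·X_n + B_n` (before reduction mod `p`)
on `ℤ^k`, where the `B_n` are i.i.d. with common distribution `μ`. -/
def chainDist {k : ℕ} (A : Matrix (Fin k) (Fin k) ℤ) (μ : (Fin k → ℤ) → ℝ) :
    ℕ → (Fin k → ℤ) → ℝ
  | 0 => fun x => if x = 0 then 1 else 0
  | n + 1 => fun x => ∑' y : Fin k → ℤ, chainDist A μ n y * μ (x - A.mulVec y)

/-- The Fourier transform of a function `f : ℤ^k → ℝ` at `α ∈ ℝ^k`: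
`f̂(α) = Σ_{h ∈ ℤ^k} exp((2πi/p)⟨h,α⟩) f(h)`. -/
def fourierZ {k : ℕ} (p : ℕ) (f : (Fin k → ℤ) → ℝ) (α : Fin k → ℝ) : ℂ :=
  ∑' h : Fin k → ℤ,
    Complex.exp (2 * Real.pi * Complex.I * (∑ i, (h i : ℂ) * (α i : ℂ)) / p) * (f h : ℂ)

section PhaseSum

variable {X : Type*}

/-- The Fourier coefficient `∑ e^{iθ(x)} w(x)` of the weights `w` against an arbitrary real phase
`θ`; `fourierZ` is the case of a linear phase on `ℤ^k`. -/
def phaseSum (θ w : X → ℝ) : ℂ :=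
  ∑' x, Complex.exp (θ x * Complex.I) * w x

lemma summable_norm_exp_mul {w : X → ℝ} (hw : Summable w) (θ : X → ℝ) :
    Summable fun x => ‖Complex.exp (θ x * Complex.I) * (w x : ℂ)‖ := by
  simpa only [norm_mul, Complex.norm_exp_ofReal_mul_I, one_mul, Complex.norm_real] using hw.norm

lemma re_exp_mul_mul_conj (s t a b : ℝ) :
    (Complex.exp (s * Complex.I) * a *
      (starRingEnd ℂ) (Complex.exp (t * Complex.I) * b)).re = a * b * Real.cos (s - t) := by
  have combine : Complex.exp (s * Complex.I) * a *
      (starRingEnd ℂ) (Complex.exp (t * Complex.I) * b) =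
        ((a * b : ℝ) : ℂ) * Complex.exp ((s - t : ℝ) * Complex.I) := by
    rw [map_mul, ← Complex.exp_conj, map_mul, Complex.conj_ofReal, Complex.conj_ofReal,
      Complex.conj_I, Complex.ofReal_sub, sub_mul, sub_eq_add_neg, Complex.exp_add, mul_neg,
      Complex.ofReal_mul]
    ring
  rw [combine, Complex.re_ofReal_mul, Complex.exp_ofReal_mul_I_re]

lemma hasSum_norm_sq_phaseSum {w : X → ℝ} (hw : Summable w) (θ : X → ℝ) :
    HasSum (fun q : X × X => w q.1 * w q.2 * Real.cos (θ q.1 - θ q.2)) (‖phaseSum θ w‖ ^ 2) := by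
  have hsum := summable_norm_exp_mul hw θ
  have hconj : Summable fun x =>
      ‖(starRingEnd ℂ) (Complex.exp (θ x * Complex.I) * (w x : ℂ))‖ := by
    simpa only [Complex.norm_conj] using hsum
  have hprod := (summable_mul_of_summable_norm hsum hconj).hasSum
  rw [← tsum_mul_tsum_of_summable_norm hsum hconj, ← Complex.conj_tsum, Complex.mul_conj,
    Complex.normSq_eq_norm_sq] at hprod
  simpa only [phaseSum, re_exp_mul_mul_conj, Complex.ofReal_re] using Complex.hasSum_re hprod

lemma norm_sq_phaseSum_le {w : X → ℝ} {M : ℝ} (hw0 : ∀ x, 0 ≤ w x) (hw : HasSum w M)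
    (θ : X → ℝ) (u v : X) :
    ‖phaseSum θ w‖ ^ 2 ≤
      M ^ 2 - 2 * w u * w v + 2 * w u * w v * Real.cos (θ u - θ v) := by
  classical
  have hmass : HasSum (fun q : X × X => w q.1 * w q.2) (M ^ 2) :=
    sq M ▸ hw.mul hw (summable_mul_of_summable_norm hw.summable.norm hw.summable.norm)
  have hdeficit : HasSum (fun q : X × X => w q.1 * w q.2 * (1 - Real.cos (θ q.1 - θ q.2)))
      (M ^ 2 - ‖phaseSum θ w‖ ^ 2) := by
    simpa only [mul_sub, mul_one] using hmass.sub (hasSum_norm_sq_phaseSum hw.summable θ)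
  have hnonneg (q : X × X) : 0 ≤ w q.1 * w q.2 * (1 - Real.cos (θ q.1 - θ q.2)) :=
    mul_nonneg (mul_nonneg (hw0 _) (hw0 _)) (sub_nonneg.mpr (Real.cos_le_one _))
  rcases eq_or_ne u v with rfl | huv
  · rw [sub_self, Real.cos_zero]
    linarith [hdeficit.nonneg hnonneg]
  · have hpair := sum_le_hasSum {(u, v), (v, u)} (fun q _ => hnonneg q) hdeficit
    rw [Finset.sum_pair fun h => huv (congrArg Prod.fst h), ← neg_sub (θ u) (θ v),
      Real.cos_neg] at hpair
    linarith

end PhaseSum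

section AffineConvolution

variable {Y G R : Type*} [AddGroup G]

lemma summable_mul_comp_sub [NormedRing R] [CompleteSpace R] {a : Y → R} {b : G → R}
    (ha : Summable fun y => ‖a y‖) (hb : Summable fun x => ‖b x‖) (φ : Y → G) :
    Summable fun q : G × Y => a q.2 * b (q.1 - φ q.2) :=
  ((Equiv.refl Y).prodShear fun y => Equiv.subRight (φ y)).summable_iff.mpr
    (summable_mul_of_summable_norm ha hb) |>.prod_symm

lemma tsum_tsum_mul_comp_sub [NormedRing R] [CompleteSpace R] {a : Y → R} {b : G → R}
    (ha : Summable fun y => ‖a y‖) (hb : Summable fun x => ‖b x‖) (φ : Y → G) :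
    ∑' x, ∑' y, a y * b (x - φ y) = (∑' y, a y) * ∑' x, b x := by
  have hsum := summable_mul_comp_sub ha hb φ
  calc ∑' x, ∑' y, a y * b (x - φ y)
      = ∑' q : G × Y, a q.2 * b (q.1 - φ q.2) := hsum.tsum_prod.symm
    _ = ∑' q : Y × G, a q.1 * b (q.2 - φ q.1) :=
        (Equiv.prodComm Y G).tsum_eq (fun q : G × Y => a q.2 * b (q.1 - φ q.2)) |>.symm
    _ = ∑' q : Y × G, a q.1 * b q.2 :=
        ((Equiv.refl Y).prodShear fun y => Equiv.subRight (φ y)).tsum_eq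
          (fun q : Y × G => a q.1 * b q.2)
    _ = (∑' y, a y) * ∑' x, b x := (tsum_mul_tsum_of_summable_norm ha hb).symm

lemma phaseSum_tsum_mul_comp_sub {f : Y → ℝ} {g : G → ℝ} (hf : Summable f) (hg : Summable g)
    (θ : G →+ ℝ) (φ : Y → G) :
    phaseSum θ (fun x => ∑' y, f y * g (x - φ y)) = phaseSum (θ ∘ φ) f * phaseSum θ g := by
  have split (x : G) (y : Y) : Complex.exp (θ x * Complex.I) =
      Complex.exp (θ (φ y) * Complex.I) * Complex.exp (θ (x - φ y) * Complex.I) := by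
    rw [← Complex.exp_add, ← add_mul, ← Complex.ofReal_add, map_sub, add_sub_cancel]
  unfold phaseSum
  rw [← tsum_tsum_mul_comp_sub (summable_norm_exp_mul hf (θ ∘ φ)) (summable_norm_exp_mul hg θ) φ]
  refine tsum_congr fun x => ?_
  rw [Complex.ofReal_tsum, ← tsum_mul_left]
  refine tsum_congr fun y => ?_
  rw [split x y, Complex.ofReal_mul, Function.comp_apply]
  ring

end AffineConvolution

section LatticePhase

variable {ι κ : Type*} [Fintype ι] [Fintype κ]

/-- The linear phase `h ↦ (2π/p) ⟨h, α⟩` of the Fourier transform on `ℤ^ι`, bundled as an additive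
map so that it is additive by construction. -/
def latticePhase (p : ℕ) (α : ι → ℝ) : (ι → ℤ) →+ ℝ where
  toFun h := (2 * Real.pi / p) * ∑ l, (h l : ℝ) * α l
  map_zero' := by simp
  map_add' h i := by simp [add_mul, Finset.sum_add_distrib, mul_add]

lemma latticePhase_mulVec (p : ℕ) (A : Matrix ι κ ℤ) (α : ι → ℝ) (h : κ → ℤ) :
    latticePhase p α (A *ᵥ h) = latticePhase p (Aᵀ.map (Int.cast : ℤ → ℝ) *ᵥ α) h := by
  have hcast : (fun l => ((A *ᵥ h) l : ℝ)) = A.map (Int.cast : ℤ → ℝ) *ᵥ fun l => (h l : ℝ) :=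
    funext ((Int.castRingHom ℝ).map_mulVec A h)
  have adjoint : (fun l => ((A *ᵥ h) l : ℝ)) ⬝ᵥ α =
      (fun l => (h l : ℝ)) ⬝ᵥ (Aᵀ.map (Int.cast : ℤ → ℝ) *ᵥ α) := by
    rw [hcast, transpose_map, mulVec_transpose, dotProduct_comm, dotProduct_mulVec,
      dotProduct_comm]
  exact congrArg (2 * Real.pi / p * ·) adjoint

end LatticePhase

section ChainDist

variable {k : ℕ} (p : ℕ) (A : Matrix (Fin k) (Fin k) ℤ) {μ : (Fin k → ℤ) → ℝ}

lemma fourierZ_eq_phaseSum (f : (Fin k → ℤ) → ℝ) (α : Fin k → ℝ) :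
    fourierZ p f α = phaseSum (latticePhase p α) f := by
  refine tsum_congr fun h => ?_
  congr 2
  simp only [latticePhase, AddMonoidHom.coe_mk, ZeroHom.coe_mk]
  push_cast
  ring

lemma summable_chainDist (hμ : Summable μ) (n : ℕ) : Summable (chainDist A μ n) := by
  induction n with
  | zero => exact (hasSum_ite_eq 0 1).summable
  | succ n ih => exact (summable_mul_comp_sub ih.norm hμ.norm A.mulVec).prod

lemma fourierZ_chainDist_zero (μ : (Fin k → ℤ) → ℝ) (α : Fin k → ℝ) :
    fourierZ p (chainDist A μ 0) α = 1 := by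
  rw [fourierZ, tsum_eq_single 0 fun x hx => by simp [chainDist, hx]]
  simp [chainDist]

lemma fourierZ_chainDist_succ (hμ : Summable μ) (n : ℕ) (α : Fin k → ℝ) :
    fourierZ p (chainDist A μ (n + 1)) α =
      fourierZ p (chainDist A μ n) (Aᵀ.map (Int.cast : ℤ → ℝ) *ᵥ α) * fourierZ p μ α := by
  have transport : latticePhase p α ∘ A.mulVec =
      latticePhase p (Aᵀ.map (Int.cast : ℤ → ℝ) *ᵥ α) :=
    funext (latticePhase_mulVec p A α)
  simp only [fourierZ_eq_phaseSum, ← transport]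
  exact phaseSum_tsum_mul_comp_sub (summable_chainDist A hμ n) hμ (latticePhase p α) A.mulVec

lemma fourierZ_chainDist (hμ : Summable μ) (n : ℕ) (α : Fin k → ℝ) :
    fourierZ p (chainDist A μ n) α =
      ∏ j ∈ Finset.range n, fourierZ p μ ((Aᵀ ^ j).map (Int.cast : ℤ → ℝ) *ᵥ α) := by
  induction n generalizing α with
  | zero => rw [fourierZ_chainDist_zero, Finset.prod_range_zero]
  | succ n ih =>
    have hpow (j : ℕ) : (Aᵀ ^ j).map (Int.cast : ℤ → ℝ) *ᵥ (Aᵀ.map (Int.cast : ℤ → ℝ) *ᵥ α) =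
        (Aᵀ ^ (j + 1)).map (Int.cast : ℤ → ℝ) *ᵥ α := by
      rw [mulVec_mulVec, pow_succ]
      exact congrArg (· *ᵥ α) (Matrix.map_mul (f := Int.castRingHom ℝ)).symm
    rw [fourierZ_chainDist_succ p A hμ, ih, Finset.prod_range_succ', pow_zero,
      Matrix.map_one _ Int.cast_zero Int.cast_one, one_mulVec]
    simp only [hpow]

end ChainDist

theorem fourier_sq_formula_and_bound_general {k : ℕ} (A : Matrix (Fin k) (Fin k) ℤ)
    {p : ℕ} (_hp : 0 < p) {μ : (Fin k → ℤ) → ℝ} {M : ℝ} (hμ0 : ∀ x, 0 ≤ μ x) (hμ : HasSum μ M)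
    (α : Fin k → ℝ) (n : ℕ) :
    ‖fourierZ p (chainDist A μ n) α‖ ^ 2 =
      (∏ j ∈ Finset.range n,
        ∑' hi : (Fin k → ℤ) × (Fin k → ℤ),
          μ hi.1 * μ hi.2 *
            Real.cos ((2 * Real.pi / p) *
              ∑ l, ((hi.1 l - hi.2 l : ℤ) : ℝ) *
                ((Aᵀ ^ j).map (Int.cast : ℤ → ℝ)).mulVec α l)) ∧
    ∀ u v : Fin k → ℤ,
      ‖fourierZ p (chainDist A μ n) α‖ ^ 2 ≤
        ∏ j ∈ Finset.range n,
          (M ^ 2 - 2 * μ u * μ v + 2 * μ u * μ v *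
            Real.cos ((2 * Real.pi / p) *
              ∑ l, ((u l - v l : ℤ) : ℝ) *
                ((Aᵀ ^ j).map (Int.cast : ℤ → ℝ)).mulVec α l)) := by
  have phase_sub (β : Fin k → ℝ) (h i : Fin k → ℤ) :
      (2 * Real.pi / p) * ∑ l, ((h l - i l : ℤ) : ℝ) * β l =
        latticePhase p β h - latticePhase p β i :=
    map_sub (latticePhase p β) h i
  simp only [fourierZ_chainDist p A hμ.summable, norm_prod, ← Finset.prod_pow,
    fourierZ_eq_phaseSum, phase_sub]
  exact ⟨Finset.prod_congr rfl fun j _ => (hasSum_norm_sq_phaseSum hμ.summable _).tsum_eq.symm,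
    fun u v => Finset.prod_le_prod (fun j _ => sq_nonneg _)
      fun j _ => norm_sq_phaseSum_le hμ0 hμ _ u v⟩

/-- **Lemma 2.2, part 2**: if `gcd(det A, p) = 1` and `X₀ = 0`, then for every `α ∈ ℝ^k`
and `n ≥ 1`,
`|P̂_n(α)|² = ∏_{j=0}^{n−1} ( Σ_{h,i ∈ ℤ^k} μ(h)μ(i) cos((2π/p)⟨h−i, ᵗA^j α⟩) )`,
and for every `u`, `v` in the support of `μ` this quantity is at most
`∏_{j=0}^{n−1} ( 1 − 2μ(u)μ(v) + 2μ(u)μ(v) cos((2π/p)⟨u−v, ᵗA^j α⟩) )`. -/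
theorem fourier_sq_formula_and_bound (k : ℕ) (hk : 1 ≤ k)
    (A : Matrix (Fin k) (Fin k) ℤ) (hA : A.det ≠ 0)
    (p : ℕ) (hp : 0 < p) (hgcd : Int.gcd A.det p = 1)
    (μ : (Fin k → ℤ) → ℝ) (hμ0 : ∀ x, 0 ≤ μ x) (hμ1 : HasSum μ 1)
    (α : Fin k → ℝ) (n : ℕ) (hn : 1 ≤ n) :
    (‖fourierZ p (chainDist A μ n) α‖) ^ 2 =
      (∏ j ∈ Finset.range n,
        ∑' hi : (Fin k → ℤ) × (Fin k → ℤ),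
          μ hi.1 * μ hi.2 *
            Real.cos ((2 * Real.pi / p) *
              ∑ l, ((hi.1 l - hi.2 l : ℤ) : ℝ) *
                ((Aᵀ ^ j).map (Int.cast : ℤ → ℝ)).mulVec α l)) ∧
    ∀ u v : Fin k → ℤ, μ u ≠ 0 → μ v ≠ 0 →
      (‖fourierZ p (chainDist A μ n) α‖) ^ 2 ≤
        ∏ j ∈ Finset.range n,
          (1 - 2 * μ u * μ v + 2 * μ u * μ v *
            Real.cos ((2 * Real.pi / p) *
              ∑ l, ((u l - v l : ℤ) : ℝ) *
                ((Aᵀ ^ j).map (Int.cast : ℤ → ℝ)).mulVec α l)) := by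
  obtain ⟨formula, bound⟩ := fourier_sq_formula_and_bound_general A hp hμ0 hμ1 α n
  exact ⟨formula, fun u v _ _ => by simpa only [one_pow] using bound u v⟩
end
end

section
/- Let M be a k×k complex matrix and λ_1, …, λ_d complex numbers such that ∏_{i=1}^{d} (M − λ_i I) = 0. Then for every j ∈ ℕ and every e with 0 ≤ e ≤ d: M^j · ∏_{i=1}^{e} (M − λ_i I) = Σ_{h=e+1}^{d} ( Σ_{k_1, …, k_{d−h+1} ≥ 0, k_1+⋯+k_{d−h+1} = j−d+h} ∏_{m=h}^{d} λ_m^{k_{d−m+1}} ) · ∏_{n=h+1}^{d} (M − λ_n I) · ∏_{i=1}^{e} (M − λ_i I), where the inner sum over (k_1, …, k_{d−h+1}) is empty (hence 0) when j − d + h < 0. -/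
open scoped BigOperators
open Matrix

noncomputable section

/-- The complete homogeneous symmetric polynomial of degree `deg` in the `m` variables
`x 0, …, x (m-1)`:  `h_deg = Σ_{k_1+⋯+k_m = deg} ∏ x_i^{k_i}`. -/
def completeHom (m : ℕ) (x : ℕ → ℂ) (deg : ℕ) : ℂ :=
  ∑ c ∈ Finset.Nat.antidiagonalTuple m deg, ∏ i : Fin m, x i ^ c i

/-! The coefficient `h_{j-d+h}(λ_h, …, λ_d)` is the divided difference of `x ↦ x ^ j` at the nodes
`λ_h, …, λ_d`, so the theorem is Newton interpolation of `X ^ j`: modulo `∏_{i>e} (X - λ_i)`, the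
polynomial `X ^ j` is the sum of its divided differences times the tails `∏_{n>h} (X - λ_n)`.
By the Leibniz rule for the divided differences of `x * x ^ j`, multiplying the expansion of `X ^ j`
by `X` telescopes to that of `X ^ (j + 1)`, up to a multiple of the modulus,
which vanishes at `M` after multiplication by `∏_{i≤e} (M - λ_i I)`. -/

section CompleteHomogeneous

open MvPolynomial

theorem hsymm_option_succ (σ R : Type*) [CommSemiring R] [Fintype σ] [DecidableEq σ] (n : ℕ) :
    hsymm (Option σ) R (n + 1) =
      X none * hsymm (Option σ) R n + rename some (hsymm σ R (n + 1)) := by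
  simp only [hsymm]
  rw [← Equiv.sum_comp symOptionSuccEquiv.symm, Fintype.sum_sum_type, Finset.mul_sum, map_sum]
  congr 1
  · refine Finset.sum_congr rfl fun s _ => ?_
    simp [symOptionSuccEquiv, Sym.coe_cons]
  · refine Finset.sum_congr rfl fun s _ => ?_
    simp [symOptionSuccEquiv, map_multiset_prod]

theorem hsymm_succ_of_isEmpty (σ R : Type*) [CommSemiring R] [Fintype σ] [DecidableEq σ]
    [IsEmpty σ] (n : ℕ) : hsymm σ R (n + 1) = 0 := by
  simp [hsymm]

variable {R : Type*} [CommSemiring R]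

theorem eval_hsymm_fin_succ {m : ℕ} (x : Fin (m + 1) → R) (n : ℕ) :
    eval x (hsymm (Fin (m + 1)) R (n + 1)) =
      x 0 * eval x (hsymm (Fin (m + 1)) R n) + eval (Fin.tail x) (hsymm (Fin m) R (n + 1)) := by
  have h_tail : x ∘ (finSuccEquiv m).symm ∘ some = Fin.tail x := by
    ext i
    simp [Fin.tail]
  rw [← rename_hsymm _ _ (n + 1) (finSuccEquiv m).symm, ← rename_hsymm _ _ n (finSuccEquiv m).symm,
    hsymm_option_succ]
  simp only [map_add, map_mul, eval_rename, eval_X, Function.comp_assoc, h_tail,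
    Function.comp_apply, finSuccEquiv_symm_none]

theorem eval_hsymm_eq_sum_antidiagonalTuple {m : ℕ} (x : Fin m → R) (n : ℕ) :
    eval x (hsymm (Fin m) R n) =
      ∑ c ∈ Finset.Nat.antidiagonalTuple m n, ∏ i, x i ^ c i := by
  rw [← Finset.piAntidiag_univ_fin_eq_antidiagonalTuple, ← Finset.map_sym_eq_piAntidiag,
    Finset.sum_map, Finset.sym_univ, hsymm, map_sum]
  refine Finset.sum_congr rfl fun s _ => ?_
  simp only [map_multiset_prod, Multiset.map_map, Function.comp_apply, eval_X]
  rw [Finset.prod_multiset_map_count]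
  refine Finset.prod_subset (Finset.subset_univ _) fun i _ hi => ?_
  rw [Multiset.count_eq_zero_of_notMem (mt Multiset.mem_toFinset.2 hi), pow_zero]

theorem completeHom_eq_eval_hsymm (m : ℕ) (x : ℕ → ℂ) (n : ℕ) :
    completeHom m x n = eval (fun i : Fin m => x i) (hsymm (Fin m) ℂ n) :=
  (eval_hsymm_eq_sum_antidiagonalTuple _ _).symm

/-- The divided difference of `x ↦ x ^ j` at the nodes `l h, …, l (d - 1)`, i.e. the complete
homogeneous symmetric polynomial of degree `j - (d - h - 1)` in these nodes. The test
`d ≤ j + h + 1` makes it `0` when this degree is negative. -/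
def powDividedDiff (l : ℕ → R) (h d j : ℕ) : R :=
  if d ≤ j + h + 1 then
    eval (fun i : Fin (d - h) => l (h + i)) (hsymm (Fin (d - h)) R (j + h + 1 - d))
  else 0

theorem powDividedDiff_eq_zero (l : ℕ → R) {h d j : ℕ} (hj : j + h + 1 < d) :
    powDividedDiff l h d j = 0 :=
  if_neg hj.not_ge

theorem powDividedDiff_eq_eval_hsymm (l : ℕ → R) {h d j m n : ℕ} (hd : d = h + m)
    (hj : j + 1 = m + n) :
    powDividedDiff l h d j = eval (fun i : Fin m => l (h + i)) (hsymm (Fin m) R n) := by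
  rw [powDividedDiff, if_pos (by omega), show d - h = m by omega, show j + h + 1 - d = n by omega]

theorem powDividedDiff_eq_one (l : ℕ → R) {h d j : ℕ} (hj : j + h + 1 = d) :
    powDividedDiff l h d j = 1 := by
  rw [powDividedDiff_eq_eval_hsymm l (m := j + 1) (n := 0) (by omega) rfl, hsymm_zero, map_one]

theorem powDividedDiff_self (l : ℕ → R) (d j : ℕ) : powDividedDiff l d d j = 0 := by
  rw [powDividedDiff_eq_eval_hsymm l (m := 0) (n := j + 1) (by omega) (by omega),
    hsymm_succ_of_isEmpty, map_zero]

theorem powDividedDiff_succ (l : ℕ → R) {h d : ℕ} (hd : h < d) (j : ℕ) :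
    powDividedDiff l h d (j + 1) =
      l h * powDividedDiff l h d j + powDividedDiff l (h + 1) d j := by
  rcases lt_trichotomy d (j + h + 2) with hj | hj | hj
  · obtain ⟨m, rfl⟩ := Nat.exists_eq_add_of_lt hd
    obtain ⟨n, rfl⟩ : ∃ n, j = m + n := Nat.exists_eq_add_of_le (by omega)
    rw [powDividedDiff_eq_eval_hsymm l (m := m + 1) (n := n + 1) (by omega) (by omega),
      powDividedDiff_eq_eval_hsymm l (m := m + 1) (n := n) (by omega) (by omega),
      powDividedDiff_eq_eval_hsymm l (m := m) (n := n + 1) (by omega) (by omega),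
      eval_hsymm_fin_succ]
    simp only [Fin.tail_def, Fin.val_zero, Fin.val_succ, add_zero, add_assoc, add_comm 1]
  · rw [powDividedDiff_eq_one l (by omega), powDividedDiff_eq_zero l (by omega),
      powDividedDiff_eq_one l (by omega), mul_zero, zero_add]
  · rw [powDividedDiff_eq_zero l (by omega), powDividedDiff_eq_zero l (by omega),
      powDividedDiff_eq_zero l (by omega), mul_zero, zero_add]

end CompleteHomogeneous

section Newton

open Polynomial Lagrange

variable {R : Type*} [CommRing R]

/-- The Newton interpolant of `X ^ j` at the nodes `l e, …, l (d - 1)`, with the nodes added in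
decreasing order of index. -/
def newtonPow (l : ℕ → R) (e d j : ℕ) : R[X] :=
  ∑ h ∈ Finset.Ico e d, C (powDividedDiff l h d j) * nodal (Finset.Ico (h + 1) d) l

theorem nodal_Ico_eq_mul (l : ℕ → R) {h d : ℕ} (hd : h < d) :
    nodal (Finset.Ico h d) l = (X - C (l h)) * nodal (Finset.Ico (h + 1) d) l :=
  Finset.prod_eq_prod_Ico_succ_bot hd _

theorem newtonPow_zero (l : ℕ → R) {e d : ℕ} (hed : e < d) : newtonPow l e d 0 = 1 := by
  obtain ⟨d, rfl⟩ := Nat.exists_eq_add_one_of_ne_zero (Nat.ne_zero_of_lt hed)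
  have h_vanish : ∀ h ∈ Finset.Ico e d,
      C (powDividedDiff l h (d + 1) 0) * nodal (Finset.Ico (h + 1) (d + 1)) l = 0 := by
    intro h hh
    rw [powDividedDiff_eq_zero l (by have := (Finset.mem_Ico.1 hh).2; omega), C_0, zero_mul]
  rw [newtonPow, Finset.sum_Ico_succ_top (Nat.le_of_lt_succ hed), Finset.sum_eq_zero h_vanish,
    powDividedDiff_eq_one l (by omega), Finset.Ico_self, nodal_empty, C_1, mul_one, zero_add]

theorem X_mul_newtonPow (l : ℕ → R) {e d : ℕ} (hed : e ≤ d) (j : ℕ) :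
    X * newtonPow l e d j =
      newtonPow l e d (j + 1) + C (powDividedDiff l e d j) * nodal (Finset.Ico e d) l := by
  let tail (h : ℕ) : R[X] := C (powDividedDiff l h d j) * nodal (Finset.Ico h d) l
  have h_term : ∀ h ∈ Finset.Ico e d,
      X * (C (powDividedDiff l h d j) * nodal (Finset.Ico (h + 1) d) l) =
        C (powDividedDiff l h d (j + 1)) * nodal (Finset.Ico (h + 1) d) l -
          (tail (h + 1) - tail h) := by
    intro h hh
    have hd := (Finset.mem_Ico.1 hh).2
    simp only [tail, powDividedDiff_succ l hd, nodal_Ico_eq_mul l hd, C_add, C_mul]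
    ring
  have h_top : tail d = 0 := by simp only [tail, powDividedDiff_self, C_0, zero_mul]
  rw [newtonPow, Finset.mul_sum, Finset.sum_congr rfl h_term, Finset.sum_sub_distrib,
    Finset.sum_Ico_sub tail hed, h_top, zero_sub, sub_neg_eq_add, newtonPow]

theorem nodal_dvd_X_pow_sub_newtonPow (l : ℕ → R) (e d j : ℕ) :
    nodal (Finset.Ico e d) l ∣ X ^ j - newtonPow l e d j := by
  rcases le_or_gt d e with hde | hed
  · simp [Finset.Ico_eq_empty_of_le hde]
  induction j with
  | zero => rw [pow_zero, newtonPow_zero l hed, sub_self]; exact dvd_zero _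
  | succ j ih =>
    have h_step : X ^ (j + 1) - newtonPow l e d (j + 1) =
        X * (X ^ j - newtonPow l e d j) +
          C (powDividedDiff l e d j) * nodal (Finset.Ico e d) l := by
      rw [mul_sub, X_mul_newtonPow l hed.le]
      ring
    rw [h_step]
    exact dvd_add (ih.mul_left X) (dvd_mul_left _ _)

end Newton

section Algebra

open Polynomial Lagrange

variable {R A : Type*} [CommRing R] [Ring A] [Algebra R A]

theorem aeval_nodal_Ico (a : A) (l : ℕ → R) (h d : ℕ) :
    aeval a (nodal (Finset.Ico h d) l) =
      ((List.range' h (d - h)).map fun i => a - l i • (1 : A)).prod := by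
  -- `Finset.Ico h d` is by definition carried by the list `List.range' h (d - h)`.
  change aeval a ((List.range' h (d - h)).map fun i => X - C (l i)).prod = _
  simp only [map_list_prod, List.map_map, Function.comp_def, map_sub, aeval_X, aeval_C,
    Algebra.algebraMap_eq_smul_one]

theorem prod_range'_sub_smul_one_mul_prod_range (a : A) (l : ℕ → R) {e d : ℕ} (hed : e ≤ d) :
    ((List.range' e (d - e)).map fun i => a - l i • (1 : A)).prod *
        ((List.range e).map fun i => a - l i • (1 : A)).prod =
      ((List.range d).map fun i => a - l i • (1 : A)).prod := by
  have h_nodal :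
      nodal (Finset.Ico e d) l * nodal (Finset.Ico 0 e) l = nodal (Finset.Ico 0 d) l := by
    rw [mul_comm]
    exact Finset.prod_Ico_consecutive _ e.zero_le hed
  simpa only [map_mul, aeval_nodal_Ico, Nat.sub_zero, ← List.range_eq_range'] using
    congrArg (aeval a) h_nodal

theorem matrix_power_prod_expansion_general (a b : A) (l : ℕ → R) (e d : ℕ)
    (hb : ((List.range' e (d - e)).map fun i => a - l i • (1 : A)).prod * b = 0) (j : ℕ) :
    a ^ j * b =
      ∑ h ∈ Finset.Ico e d, powDividedDiff l h d j •
        (((List.range' (h + 1) (d - (h + 1))).map fun i => a - l i • (1 : A)).prod * b) := by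
  obtain ⟨q, hq⟩ := nodal_dvd_X_pow_sub_newtonPow l e d j
  have h_zero : (a ^ j - aeval a (newtonPow l e d j)) * b = 0 := by
    have h_eval := congrArg (aeval a) hq
    rw [mul_comm, map_sub, map_mul, map_pow, aeval_X, aeval_nodal_Ico] at h_eval
    rw [h_eval, mul_assoc, hb, mul_zero]
  rw [sub_mul, sub_eq_zero] at h_zero
  simp only [h_zero, newtonPow, map_sum, map_mul, aeval_C, aeval_nodal_Ico, Finset.sum_mul,
    Algebra.smul_def, mul_assoc]

end Algebra

/-- **Lemma 2.5, part 2**: if `∏_{i=1}^{d} (M − λ_i I) = 0` (here `λ_i = l (i-1)`), then for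
every `j ∈ ℕ` and every `e ≤ d`,
`M^j ∏_{i=1}^{e} (M − λ_i I)
  = Σ_{h=e+1}^{d} h_{j−d+h}(λ_h,…,λ_d) ∏_{n=h+1}^{d} (M − λ_n I) ∏_{i=1}^{e} (M − λ_i I)`,
where `h_{j−d+h}` is the complete homogeneous symmetric polynomial of degree `j−d+h`
(interpreted as `0` when `j−d+h < 0`). -/
theorem matrix_power_prod_expansion (k d : ℕ) (M : Matrix (Fin k) (Fin k) ℂ) (l : ℕ → ℂ)
    (hmin : ((List.range d).map (fun i => M - l i • (1 : Matrix (Fin k) (Fin k) ℂ))).prod = 0) :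
    ∀ j e : ℕ, e ≤ d →
      M ^ j * ((List.range e).map (fun i => M - l i • (1 : Matrix (Fin k) (Fin k) ℂ))).prod =
        ∑ h ∈ Finset.Ico e d,
          (if d ≤ j + h + 1 then completeHom (d - h) (fun i => l (h + i)) (j + h + 1 - d)
            else 0) •
          (((List.range' (h + 1) (d - (h + 1))).map
              (fun i => M - l i • (1 : Matrix (Fin k) (Fin k) ℂ))).prod *
            ((List.range e).map (fun i => M - l i • (1 : Matrix (Fin k) (Fin k) ℂ))).prod) := by
  intro j e hed
  simpa only [powDividedDiff, completeHom_eq_eval_hsymm] using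
    matrix_power_prod_expansion_general M _ l e d
      ((prod_range'_sub_smul_one_mul_prod_range M l hed).trans hmin) j
end
end

section
/- Assume A has complex eigenvalues λ_1, …, λ_k, all nonzero, with |λ_i| ≠ 1 for every i = 1, …, k, and assume the support of μ is not parallel to a proper subspace of ℚ^k invariant under A. Then there exist a constant c > 0 and a function ε : ℕ → ℝ with ε(p) → 0 as p → ∞, such that for every positive integer p with gcd(det(A), p) = 1 and gcd(det(B), p) = 1, and every n ≥ c·(ln p)², one has ‖P_n − U‖ ≤ ε(p). -/
open scoped BigOperators
open Matrix

noncomputable section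

/-- `P_n`, the distribution of `X_n = A·X_{n-1} + B_{n-1} (mod p)` on `(ℤ/pℤ)^k`. -/
def chainDistMod {k : ℕ} (A : Matrix (Fin k) (Fin k) ℤ) (μ : (Fin k → ℤ) → ℝ) (p : ℕ)
    (n : ℕ) (x : Fin k → ZMod p) : ℝ :=
  ∑' y : {y : Fin k → ℤ // (fun i => ((y i : ZMod p))) = x}, chainDist A μ n y.val

/-- The uniform distribution `U` on `(ℤ/pℤ)^k`. -/
def unif (k p : ℕ) : ℝ := ((p : ℝ) ^ k)⁻¹

/-- The variation distance `‖P_n − U‖`. -/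
def tvDist {k : ℕ} (A : Matrix (Fin k) (Fin k) ℤ) (μ : (Fin k → ℤ) → ℝ) (p : ℕ)
    (n : ℕ) : ℝ :=
  (1 / 2) * ∑' x : Fin k → ZMod p, |chainDistMod A μ p n x - unif k p|

/-- `supp μ` is parallel to `v + W` for some proper subspace `W` of `ℚ^k` invariant under
`A`. -/
def ParallelInv {k : ℕ} (A : Matrix (Fin k) (Fin k) ℤ) (μ : (Fin k → ℤ) → ℝ) : Prop :=
  ∃ (W : Submodule ℚ (Fin k → ℚ)) (v : Fin k → ℚ), W ≠ ⊤ ∧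
    (∀ w ∈ W, (A.map (Int.cast : ℤ → ℚ)).mulVec w ∈ W) ∧
    ∀ x : Fin k → ℤ, μ x ≠ 0 → (fun i => (x i : ℚ)) - v ∈ W

/-- `V = {h − k : h, k ∈ supp μ}`. -/
def Vset {k : ℕ} (μ : (Fin k → ℤ) → ℝ) : Set (Fin k → ℤ) :=
  {x | ∃ h g : Fin k → ℤ, μ h ≠ 0 ∧ μ g ≠ 0 ∧ x = h - g}

/-- `d`, the degree of the minimal polynomial of `A` (over `ℚ`). -/
def minpolyDeg {k : ℕ} (A : Matrix (Fin k) (Fin k) ℤ) : ℕ :=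
  (minpoly ℚ (A.map (Int.cast : ℤ → ℚ))).natDegree

/-- `V^{d−1} = {A^m x : x ∈ V, m = 0, …, d−1}`. -/
def VdSet {k : ℕ} (A : Matrix (Fin k) (Fin k) ℤ) (μ : (Fin k → ℤ) → ℝ) :
    Set (Fin k → ℤ) :=
  {y | ∃ x ∈ Vset μ, ∃ m : ℕ, m < minpolyDeg A ∧ y = (A ^ m).mulVec x}

/-- The matrix `B = (y_1 … y_k)` with columns `y_1, …, y_k`. -/
def colMat {k : ℕ} (y : Fin k → (Fin k → ℤ)) : Matrix (Fin k) (Fin k) ℤ :=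
  Matrix.of fun i j => y j i

/-! By the Fourier upper bound lemma it suffices to bound the characteristic function of `X_n` at
nonzero frequencies `θ` mod `p`. That function is the product over `j < n` of `μ̂` at the
frequencies `θ ∘ A ^ j`, and a factor is bounded away from `1` as soon as `θ (A ^ j v)` is at
distance at least `δ p` from `0` modulo `p` for some difference `v` of two support points.

If for every column of `B` this distance stayed below `δ p` along order `log p` consecutive
exponents, the small representatives would be integer solutions of the recurrence whose
characteristic polynomial is that of `A`. As no eigenvalue has modulus one, such a solution decays
exponentially from the two ends of the window towards its centre, where it is less than `1` and
hence `0`; so `θ` would kill the columns of a matrix whose determinant is a unit mod `p`. Each block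
of order `log p` factors thus contributes a fixed `β < 1`, and order `log p` blocks beat the factor
`p ^ k` lost in the upper bound lemma.
-/

section LinearRecurrence

open Polynomial

/-- The left shift on sequences. A sequence `u` satisfies the linear recurrence with characteristic
polynomial `f` at index `i` when `aeval (shift R M) f u i = 0`. -/
def shift (R M : Type*) [Semiring R] [AddCommMonoid M] [Module R M] : Module.End R (ℕ → M) :=
  LinearMap.funLeft R M Nat.succ

section Algebra

variable {R M N : Type*} [CommSemiring R] [AddCommMonoid M] [Module R M]
  [AddCommMonoid N] [Module R N]

lemma shift_pow_apply (t : ℕ) (u : ℕ → M) (i : ℕ) : (shift R M ^ t) u i = u (i + t) := by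
  induction t generalizing u i with
  | zero => rfl
  | succ t ih =>
    rw [pow_succ, Module.End.mul_apply, ih]
    exact congrArg u (Nat.succ_eq_add_one _)

lemma aeval_shift_apply (f : R[X]) {n : ℕ} (hn : f.natDegree < n) (u : ℕ → M) (i : ℕ) :
    aeval (shift R M) f u i = ∑ t ∈ Finset.range n, f.coeff t • u (i + t) := by
  simp only [aeval_eq_sum_range' hn, LinearMap.sum_apply, Finset.sum_apply, LinearMap.smul_apply,
    Pi.smul_apply, shift_pow_apply]

lemma aeval_shift_comp (f : R[X]) (φ : M →ₗ[R] N) (u : ℕ → M) (i : ℕ) :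
    aeval (shift R N) f (fun j ↦ φ (u j)) i = φ (aeval (shift R M) f u i) := by
  simp only [aeval_shift_apply f (Nat.lt_succ_self _), map_sum, map_smul]

lemma aeval_shift_map {S : Type*} [CommSemiring S] [Algebra R S] [Module S M] [IsScalarTower R S M]
    (f : R[X]) (u : ℕ → M) :
    aeval (shift S M) (f.map (algebraMap R S)) u = aeval (shift R M) f u := by
  funext i
  rw [aeval_shift_apply _ (Nat.lt_succ_of_le natDegree_map_le),
    aeval_shift_apply f (Nat.lt_succ_self _)]
  simp only [coeff_map, algebraMap_smul]

lemma aeval_shift_pow_eq_zero {S : Type*} [Semiring S] [Algebra R S] {a : S} {f : R[X]}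
    (hf : aeval a f = 0) : aeval (shift R S) f (fun j ↦ a ^ j) = 0 := by
  funext i
  calc aeval (shift R S) f (fun j ↦ a ^ j) i = a ^ i * aeval a f := by
        rw [aeval_shift_apply f (Nat.lt_succ_self _), aeval_eq_sum_range]
        simp only [Finset.mul_sum, mul_smul_comm, pow_add, Nat.succ_eq_add_one]
    _ = 0 := by rw [hf, mul_zero]

end Algebra

lemma le_div_one_sub_add_pow_mul {b : ℕ → ℝ} {q K : ℝ} (hq : 0 ≤ q) (hq1 : q < 1) (hK : 0 ≤ K)
    {n : ℕ} (hb : ∀ i < n, b (i + 1) ≤ K + q * b i) : b n ≤ K / (1 - q) + q ^ n * b 0 := by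
  have h1q : 0 < 1 - q := sub_pos.2 hq1
  induction n with
  | zero =>
    rw [pow_zero, one_mul]
    exact le_add_of_nonneg_left (by positivity)
  | succ n ih =>
    calc b (n + 1) ≤ K + q * b n := hb n n.lt_succ_self
      _ ≤ K + q * (K / (1 - q) + q ^ n * b 0) := by
          gcongr
          exact ih fun i hi ↦ hb i (hi.trans n.lt_succ_self)
      _ = K / (1 - q) + q ^ (n + 1) * b 0 := by field_simp; ring

section Hyperbolic

variable {𝕜 E : Type*} [NormedField 𝕜] [SeminormedAddCommGroup E] [NormedSpace 𝕜 E]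

lemma norm_le_of_norm_sub_smul_le_of_norm_lt_one {z : 𝕜} (hz : ‖z‖ < 1) {u : ℕ → E} {K : ℝ}
    (hK : 0 ≤ K) {n m : ℕ} (hu : ∀ i < m, ‖u (n + i + 1) - z • u (n + i)‖ ≤ K) :
    ‖u (n + m)‖ ≤ K / (1 - ‖z‖) + ‖z‖ ^ m * ‖u n‖ :=
  le_div_one_sub_add_pow_mul (b := fun i ↦ ‖u (n + i)‖) (norm_nonneg z) hz hK fun i hi ↦ by
    rw [← norm_smul]
    exact (norm_le_norm_sub_add _ _).trans (add_le_add_left (hu i hi) _)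

lemma norm_le_of_norm_sub_smul_le_of_one_lt_norm {z : 𝕜} (hz : 1 < ‖z‖) {u : ℕ → E} {K : ℝ}
    (hK : 0 ≤ K) {n m : ℕ} (hu : ∀ i < m, ‖u (n + i + 1) - z • u (n + i)‖ ≤ K) :
    ‖u n‖ ≤ K / (‖z‖ - 1) + ‖z‖⁻¹ ^ m * ‖u (n + m)‖ := by
  have hz0 : 0 < ‖z‖ := one_pos.trans hz
  have hz_inv : ‖z‖⁻¹ < 1 := inv_lt_one_of_one_lt₀ hz
  have hstep : ∀ i < m, ‖u (n + m - (i + 1))‖ ≤ ‖z‖⁻¹ * K + ‖z‖⁻¹ * ‖u (n + m - i)‖ := by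
    intro i hi
    have hu' := hu (m - (i + 1)) (by omega)
    rw [← Nat.add_sub_assoc hi, show n + m - (i + 1) + 1 = n + m - i by omega,
      norm_sub_rev] at hu'
    rw [← mul_add, le_inv_mul_iff₀ hz0, ← norm_smul]
    exact (norm_le_norm_sub_add _ _).trans (add_le_add_left hu' _)
  have hbound := le_div_one_sub_add_pow_mul (b := fun i ↦ ‖u (n + m - i)‖) (inv_nonneg.2 hz0.le)
    hz_inv (by positivity) hstep
  have hconst : ‖z‖⁻¹ * K / (1 - ‖z‖⁻¹) = K / (‖z‖ - 1) := by
    rw [inv_mul_eq_div, div_div, mul_sub, mul_one, mul_inv_cancel₀ hz0.ne']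
  rwa [Nat.add_sub_cancel, Nat.sub_zero, hconst] at hbound

-- A modulus below one is used to propagate forwards from `j - m`, one above to propagate
-- backwards from `j + m`.
lemma exists_norm_le_of_norm_sub_smul_le {z : 𝕜} (hz : ‖z‖ ≠ 1) {η : ℝ} (hη : 0 < η) :
    ∃ m : ℕ, ∀ (u : ℕ → E) (K M : ℝ) (j : ℕ), m ≤ j →
      (∀ i ∈ Set.Icc (j - m) (j + m), ‖u i‖ ≤ M ∧ ‖u (i + 1) - z • u i‖ ≤ K) →
      ‖u j‖ ≤ K / |1 - ‖z‖| + η * M := by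
  rcases lt_or_gt_of_ne hz with hz1 | hz1
  · obtain ⟨m, hm⟩ := exists_pow_lt_of_lt_one hη hz1
    refine ⟨m, fun u K M j hj h ↦ ?_⟩
    have hK : 0 ≤ K := (norm_nonneg _).trans (h j (by simp)).2
    have hforward := norm_le_of_norm_sub_smul_le_of_norm_lt_one hz1 hK (n := j - m) (m := m)
      fun i hi ↦ (h (j - m + i) ⟨by omega, by omega⟩).2
    rw [Nat.sub_add_cancel hj] at hforward
    rw [abs_of_pos (sub_pos.2 hz1)]
    refine hforward.trans (add_le_add_right ?_ _)
    gcongr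
    exact (h (j - m) ⟨le_rfl, by omega⟩).1
  · obtain ⟨m, hm⟩ := exists_pow_lt_of_lt_one hη (inv_lt_one_of_one_lt₀ hz1)
    refine ⟨m, fun u K M j hj h ↦ ?_⟩
    have hK : 0 ≤ K := (norm_nonneg _).trans (h j (by simp)).2
    have hbackward := norm_le_of_norm_sub_smul_le_of_one_lt_norm hz1 hK (n := j) (m := m)
      fun i hi ↦ (h (j + i) ⟨by omega, by omega⟩).2
    rw [abs_of_neg (sub_neg.2 hz1), neg_sub]
    refine hbackward.trans (add_le_add_right ?_ _)
    gcongr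
    exact (h (j + m) ⟨by omega, le_rfl⟩).1

variable (E) in
/-- The recurrence `f` contracts windows if a solution on a long enough window is much smaller at
the centre of the window than its supremum over the window. -/
def ContractsWindows (f : 𝕜[X]) : Prop :=
  ∀ η : ℝ, 0 < η → ∃ L : ℕ, ∀ (u : ℕ → E) (M : ℝ) (j : ℕ), L ≤ j →
    (∀ i ∈ Set.Icc (j - L) (j + L), ‖u i‖ ≤ M ∧ aeval (shift 𝕜 E) f u i = 0) → ‖u j‖ ≤ η * M

lemma contractsWindows_C {c : 𝕜} (hc : c ≠ 0) : ContractsWindows E (C c) := by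
  refine fun η hη ↦ ⟨0, fun u M j _ h ↦ ?_⟩
  obtain ⟨hM, hrec⟩ := h j (by simp)
  have huj : u j = 0 := by
    simpa only [aeval_C, Module.algebraMap_end_apply, Pi.smul_apply, smul_eq_zero_iff_right hc]
      using hrec
  rw [huj, norm_zero] at hM ⊢
  positivity

-- Apply the hypothesis on `f` to `v i = u (i + 1) - z • u i`, then the first-order case to `u`.
lemma ContractsWindows.mul_X_sub_C {f : 𝕜[X]} (hf : ContractsWindows E f) {z : 𝕜}
    (hz : ‖z‖ ≠ 1) : ContractsWindows E (f * (X - C z)) := by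
  intro η hη
  have : 0 < |1 - ‖z‖| := abs_pos.2 (sub_ne_zero.2 hz.symm)
  obtain ⟨m, hm⟩ := exists_norm_le_of_norm_sub_smul_le (E := E) hz (half_pos hη)
  obtain ⟨L, hL⟩ := hf (η / 2 * |1 - ‖z‖| / (1 + ‖z‖)) (by positivity)
  refine ⟨L + m + 1, fun u M j hj h ↦ ?_⟩
  set v : ℕ → E := aeval (shift 𝕜 E) (X - C z) u with hv
  have hv_apply (i : ℕ) : v i = u (i + 1) - z • u i := by
    simp [hv, shift, LinearMap.funLeft_apply]
  have hv_rec (i : ℕ) : aeval (shift 𝕜 E) f v i = aeval (shift 𝕜 E) (f * (X - C z)) u i := by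
    rw [map_mul, Module.End.mul_apply]
  have hv_le : ∀ i ∈ Set.Icc (j - m - L) (j + m + L), ‖v i‖ ≤ (1 + ‖z‖) * M := by
    intro i hi
    rw [Set.mem_Icc] at hi
    have hi0 := (h i ⟨by omega, by omega⟩).1
    have hi1 := (h (i + 1) ⟨by omega, by omega⟩).1
    calc ‖v i‖ ≤ ‖u (i + 1)‖ + ‖z‖ * ‖u i‖ := by
          rw [hv_apply, ← norm_smul]
          exact norm_sub_le _ _
      _ ≤ M + ‖z‖ * M := by gcongr
      _ = (1 + ‖z‖) * M := by ring
  have hv_small : ∀ i ∈ Set.Icc (j - m) (j + m), ‖v i‖ ≤ η / 2 * |1 - ‖z‖| * M := by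
    intro i hi
    rw [Set.mem_Icc] at hi
    refine (hL v ((1 + ‖z‖) * M) i (by omega) fun i' hi' ↦ ?_).trans_eq (by field_simp)
    rw [Set.mem_Icc] at hi'
    exact ⟨hv_le i' ⟨by omega, by omega⟩, hv_rec i' ▸ (h i' ⟨by omega, by omega⟩).2⟩
  refine (hm u _ M j (by omega) fun i hi ↦ ⟨?_, hv_apply i ▸ hv_small i hi⟩).trans_eq ?_
  · rw [Set.mem_Icc] at hi
    exact (h i ⟨by omega, by omega⟩).1
  · field_simp
    ring

theorem contractsWindows_of_splits {f : 𝕜[X]} (hsplits : f.Splits)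
    (hf : ∀ z, f.IsRoot z → ‖z‖ ≠ 1) : ContractsWindows E f := by
  have hf0 : f ≠ 0 := by
    rintro rfl
    exact hf 1 (by simp) norm_one
  suffices ∀ s : Multiset 𝕜, (∀ z ∈ s, ‖z‖ ≠ 1) →
      ContractsWindows E (C f.leadingCoeff * (s.map fun z ↦ X - C z).prod) by
    rw [hsplits.eq_prod_roots]
    exact this _ fun z hz ↦ hf z (isRoot_of_mem_roots hz)
  intro s
  induction s using Multiset.induction_on with
  | empty =>
    intro _
    simpa only [Multiset.map_zero, Multiset.prod_zero, mul_one] using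
      contractsWindows_C (leadingCoeff_ne_zero.2 hf0)
  | cons z s ih =>
    intro hs
    rw [Multiset.map_cons, Multiset.prod_cons, mul_comm (X - C z), ← mul_assoc]
    exact (ih fun w hw ↦ hs w (Multiset.mem_cons_of_mem hw)).mul_X_sub_C
      (hs z (Multiset.mem_cons_self z s))

lemma ContractsWindows.exists_norm_le_half_pow_mul {f : 𝕜[X]} (hf : ContractsWindows E f) :
    ∃ L : ℕ, ∀ (m : ℕ) (u : ℕ → E) (M : ℝ) (j : ℕ), m * L ≤ j →
      (∀ i ∈ Set.Icc (j - m * L) (j + m * L), ‖u i‖ ≤ M ∧ aeval (shift 𝕜 E) f u i = 0) →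
      ‖u j‖ ≤ (1 / 2) ^ m * M := by
  obtain ⟨L, hL⟩ := hf (1 / 2) (by norm_num)
  refine ⟨L, fun m ↦ ?_⟩
  induction m with
  | zero =>
    intro u M j _ h
    rw [pow_zero, one_mul]
    exact (h j (by simp)).1
  | succ m ih =>
    intro u M j hj h
    rw [Nat.succ_mul] at hj h
    rw [pow_succ', mul_assoc]
    refine hL u _ j (by omega) fun i hi ↦ ?_
    rw [Set.mem_Icc] at hi
    refine ⟨ih u M i (by omega) fun i' hi' ↦ ?_, (h i ⟨by omega, by omega⟩).2⟩
    rw [Set.mem_Icc] at hi'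
    exact h i' ⟨by omega, by omega⟩

end Hyperbolic

end LinearRecurrence

section RecurrenceModP

open Polynomial

-- The recurrence holds for the representatives up to a multiple of `p`, which is too small to be
-- nonzero.
lemma aeval_shift_valMinAbs_eq_zero {p : ℕ} [NeZero p] (f : ℤ[X]) (w : ℕ → ZMod p) {B : ℝ} {i : ℕ}
    (hrec : aeval (shift ℤ (ZMod p)) f w i = 0)
    (hB : ∀ t ≤ f.natDegree, |((w (i + t)).valMinAbs : ℝ)| ≤ B)
    (hlt : (∑ t ∈ Finset.range (f.natDegree + 1), |(f.coeff t : ℝ)|) * B < p) :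
    aeval (shift ℤ ℤ) f (fun j ↦ (w j).valMinAbs) i = 0 := by
  set r : ℤ := aeval (shift ℤ ℤ) f (fun j ↦ (w j).valMinAbs) i with hr
  have hdvd : (p : ℤ) ∣ r := by
    have hcast := aeval_shift_comp f (Int.castAddHom (ZMod p)).toIntLinearMap
      (fun j ↦ (w j).valMinAbs) i
    simp only [AddMonoidHom.coe_toIntLinearMap, Int.coe_castAddHom, ZMod.coe_valMinAbs] at hcast
    rw [← ZMod.intCast_zmod_eq_zero_iff_dvd, ← hcast, hrec]
  have habs : |(r : ℝ)| < p := by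
    refine lt_of_le_of_lt ?_ hlt
    rw [hr, aeval_shift_apply f (Nat.lt_succ_self _), Finset.sum_mul]
    push_cast [smul_eq_mul]
    refine (Finset.abs_sum_le_sum_abs _ _).trans (Finset.sum_le_sum fun t ht ↦ ?_)
    rw [abs_mul]
    gcongr
    exact hB t (Finset.mem_range_succ_iff.1 ht)
  exact Int.eq_zero_of_abs_lt_dvd hdvd (by exact_mod_cast habs)

lemma exists_eq_zero_of_abs_lt_two_pow (f : ℤ[X]) (hf : ∀ z : ℂ, aeval z f = 0 → ‖z‖ ≠ 1) :
    ∃ L : ℕ, ∀ (m : ℕ) (u : ℕ → ℤ),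
      (∀ i ≤ 2 * (m * L), |u i| < 2 ^ m ∧ aeval (shift ℤ ℤ) f u i = 0) → u (m * L) = 0 := by
  have hcontr : ContractsWindows ℂ (f.map (algebraMap ℤ ℂ)) :=
    contractsWindows_of_splits (IsAlgClosed.splits _) fun z hz ↦ hf z (by
      rwa [IsRoot.def, eval_map_algebraMap] at hz)
  obtain ⟨L, hL⟩ := hcontr.exists_norm_le_half_pow_mul
  refine ⟨L, fun m u hu ↦ ?_⟩
  have hcentre : ‖(u (m * L) : ℂ)‖ ≤ (1 / 2) ^ m * (2 ^ m - 1) :=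
    hL m (fun j ↦ (u j : ℂ)) _ (m * L) le_rfl fun i hi ↦ by
      rw [Set.mem_Icc] at hi
      obtain ⟨hlt, hrec⟩ := hu i (by omega)
      refine ⟨?_, ?_⟩
      · rw [Complex.norm_intCast]
        exact_mod_cast Int.le_sub_one_of_lt hlt
      · rw [aeval_shift_map]
        exact (aeval_shift_comp f (Int.castAddHom ℂ).toIntLinearMap u i).trans (by
          rw [hrec, map_zero])
  have hlt_one : |(u (m * L) : ℝ)| < 1 :=
    calc |(u (m * L) : ℝ)| ≤ (1 / 2) ^ m * (2 ^ m - 1) := Complex.norm_intCast _ ▸ hcentre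
      _ = 1 - (1 / 2) ^ m := by rw [_root_.one_div_pow]; field_simp
      _ < 1 := sub_lt_self 1 (by positivity)
  exact Int.abs_lt_one_iff.1 (by exact_mod_cast hlt_one)

theorem exists_eq_zero_of_valMinAbs_lt (f : ℤ[X]) (hf : ∀ z : ℂ, aeval z f = 0 → ‖z‖ ≠ 1) :
    ∃ δ : ℝ, 0 < δ ∧ ∃ L : ℕ, ∀ (p m : ℕ) [NeZero p], p ≤ 2 ^ m → ∀ w : ℕ → ZMod p,
      aeval (shift ℤ (ZMod p)) f w = 0 →
      (∀ i ≤ 2 * (m * L) + f.natDegree, |((w i).valMinAbs : ℝ)| < δ * p) → w (m * L) = 0 := by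
  obtain ⟨L, hL⟩ := exists_eq_zero_of_abs_lt_two_pow f hf
  set S : ℝ := ∑ t ∈ Finset.range (f.natDegree + 1), |(f.coeff t : ℝ)| with hS
  have hS0 : 0 ≤ S := Finset.sum_nonneg fun t _ ↦ abs_nonneg _
  have hδ : 1 / (S + 1) ≤ 1 := (div_le_one (by positivity)).2 (by linarith)
  refine ⟨1 / (S + 1), by positivity, L, fun p m _ hpm w hrec hsmall ↦ ?_⟩
  have hp : (0 : ℝ) < p := Nat.cast_pos.2 (NeZero.pos p)
  rw [← ZMod.valMinAbs_eq_zero]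
  refine hL m (fun i ↦ (w i).valMinAbs) fun i hi ↦ ⟨?_, ?_⟩
  · have : |((w i).valMinAbs : ℝ)| < 2 ^ m :=
      calc |((w i).valMinAbs : ℝ)| < 1 / (S + 1) * p := hsmall i (by omega)
        _ ≤ p := mul_le_of_le_one_left hp.le hδ
        _ ≤ 2 ^ m := by exact_mod_cast hpm
    exact_mod_cast this
  · refine aeval_shift_valMinAbs_eq_zero f w (congrFun hrec i)
      (fun t ht ↦ (hsmall (i + t) (by omega)).le) ?_
    rw [← hS, ← mul_assoc, mul_one_div]
    exact mul_lt_of_lt_one_left hp ((div_lt_one (by positivity)).2 (lt_add_one S))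

end RecurrenceModP

section MatrixOrbit

variable {ι : Type*} [Fintype ι] [DecidableEq ι]

lemma eq_zero_of_isUnit_det {R : Type*} [CommRing R] {N : Matrix ι ι ℤ}
    (hN : IsUnit (N.det : R)) {θ : (ι → ℤ) →+ R} (hθ : ∀ j, θ (N.col j) = 0) : θ = 0 := by
  have hrange (v : ι → ℤ) : θ (N *ᵥ v) = 0 := by
    simp only [Matrix.mulVec_eq_sum, op_smul_eq_smul, map_sum, map_zsmul]
    exact Finset.sum_eq_zero fun j _ ↦ (congrArg (v j • ·) (hθ j)).trans (smul_zero _)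
  refine AddMonoidHom.ext fun x ↦ ?_
  have hdet : (N.det : R) * θ x = 0 := by
    rw [← zsmul_eq_mul, ← map_zsmul, ← hrange (N.adjugate *ᵥ x), Matrix.mulVec_mulVec,
      Matrix.mul_adjugate, Matrix.smul_mulVec, Matrix.one_mulVec]
  exact hN.mul_right_eq_zero.1 hdet

theorem exists_le_valMinAbs_orbit (A B : Matrix ι ι ℤ)
    (hA : ∀ z : ℂ, Polynomial.aeval z A.charpoly = 0 → ‖z‖ ≠ 1) :
    ∃ δ : ℝ, 0 < δ ∧ ∃ T : ℕ, ∀ (p : ℕ) [NeZero p], IsUnit (A.det : ZMod p) →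
      IsUnit (B.det : ZMod p) → ∀ θ : (ι → ℤ) →+ ZMod p, θ ≠ 0 → ∀ s : ℕ,
      ∃ i < T * (Nat.log 2 p + 1), ∃ j,
        δ * p ≤ |((θ (A ^ (s + i) *ᵥ B.col j)).valMinAbs : ℝ)| := by
  obtain ⟨δ, hδ, L, hL⟩ := exists_eq_zero_of_valMinAbs_lt A.charpoly hA
  refine ⟨δ, hδ, 2 * L + A.charpoly.natDegree + 1, fun p _ hAp hBp θ hθ s ↦ ?_⟩
  set m := Nat.log 2 p + 1
  by_contra! hsmall
  have hzero (j : ι) : θ (A ^ (s + m * L) *ᵥ B.col j) = 0 := by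
    let φ : Matrix ι ι ℤ →+ ZMod p := θ.comp
      ((Matrix.mulVec.addMonoidHomLeft (B.col j)).comp (AddMonoidHom.mulLeft (A ^ s)))
    have hφ (i : ℕ) : φ (A ^ i) = θ (A ^ (s + i) *ᵥ B.col j) := by
      rw [pow_add]; rfl
    rw [← hφ]
    refine hL p m (Nat.lt_pow_succ_log_self one_lt_two p).le (fun i ↦ φ (A ^ i)) ?_ fun i hi ↦ ?_
    · funext i
      refine (aeval_shift_comp A.charpoly φ.toIntLinearMap (fun i ↦ A ^ i) i).trans ?_
      rw [aeval_shift_pow_eq_zero A.aeval_self_charpoly, Pi.zero_apply, map_zero, Pi.zero_apply]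
    · rw [hφ]
      refine hsmall i (hi.trans_lt ?_) j
      have hm : A.charpoly.natDegree + 1 ≤ (A.charpoly.natDegree + 1) * m :=
        Nat.le_mul_of_pos_right _ (Nat.succ_pos _)
      linarith
  refine hθ (eq_zero_of_isUnit_det (N := A ^ (s + m * L) * B) ?_ hzero)
  rw [Matrix.det_mul, Matrix.det_pow, Int.cast_mul, Int.cast_pow]
  exact (hAp.pow _).mul hBp

end MatrixOrbit

section BlockProduct

variable {φ : ℕ → ℝ} {β : ℝ}

lemma prod_range_le_of_exists_le (hφ0 : ∀ j, 0 ≤ φ j) (hφ1 : ∀ j, φ j ≤ 1) {T : ℕ}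
    (h : ∃ i < T, φ i ≤ β) : ∏ j ∈ Finset.range T, φ j ≤ β := by
  obtain ⟨i, hi, hiβ⟩ := h
  calc ∏ j ∈ Finset.range T, φ j ≤ ∏ j ∈ {i}, φ j :=
        Finset.prod_le_prod_of_subset_of_le_one
          (Finset.singleton_subset_iff.2 (Finset.mem_range.2 hi)) (fun j _ ↦ hφ0 j)
          fun j _ _ ↦ hφ1 j
    _ = φ i := Finset.prod_singleton _ _
    _ ≤ β := hiβ

lemma prod_range_le_pow_div (hφ0 : ∀ j, 0 ≤ φ j) (hφ1 : ∀ j, φ j ≤ 1) {T : ℕ}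
    (h : ∀ s, ∃ i < T, φ (s + i) ≤ β) (n : ℕ) : ∏ j ∈ Finset.range n, φ j ≤ β ^ (n / T) := by
  have hblocks (q : ℕ) : ∏ j ∈ Finset.range (q * T), φ j ≤ β ^ q := by
    induction q with
    | zero => simp
    | succ q ih =>
      have hprod0 : 0 ≤ ∏ j ∈ Finset.range (q * T), φ j := Finset.prod_nonneg fun j _ ↦ hφ0 j
      rw [Nat.succ_mul, Finset.prod_range_add, pow_succ]
      exact mul_le_mul ih
        (prod_range_le_of_exists_le (fun j ↦ hφ0 _) (fun j ↦ hφ1 _) (h (q * T)))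
        (Finset.prod_nonneg fun j _ ↦ hφ0 _) (hprod0.trans ih)
  exact (Finset.prod_le_prod_of_subset_of_le_one
    (Finset.range_mono (Nat.div_mul_le_self n T)) (fun j _ ↦ hφ0 j) fun j _ _ ↦ hφ1 j).trans
    (hblocks (n / T))

end BlockProduct

section CharacterTransform

lemma hasSum_tsum_mul_sub {R G H : Type*} [NormedRing R] [CompleteSpace R] [AddGroup H]
    {a : G → R} {b : H → R} (ha : Summable fun y ↦ ‖a y‖) (hb : Summable fun z ↦ ‖b z‖)
    (f : G → H) :
    HasSum (fun x ↦ ∑' y, a y * b (x - f y)) ((∑' y, a y) * ∑' z, b z) := by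
  have hprod : HasSum (fun q : G × H ↦ a q.1 * b q.2) ((∑' y, a y) * ∑' z, b z) :=
    ha.of_norm.hasSum.mul hb.of_norm.hasSum (summable_mul_of_summable_norm ha hb)
  have hskew := (((Equiv.refl G).prodShear fun y ↦ Equiv.subRight (f y)).hasSum_iff).2 hprod
  have hswap := (Equiv.prodComm H G).hasSum_iff.2 hskew
  exact hswap.prod_fiberwise fun x ↦ (hswap.summable.prod_factor x).hasSum

lemma single_add_single_le {G : Type*} [DecidableEq G] {ν : G → ℝ} (hν0 : 0 ≤ ν) {h g : G} {t : ℝ}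
    (hh : 2 * t ≤ ν h) (hg : 2 * t ≤ ν g) : Pi.single h t + Pi.single g t ≤ ν := by
  intro x
  have := hν0 x
  simp only [Pi.add_apply, Pi.single_apply, Pi.zero_apply] at this ⊢
  split_ifs <;> subst_vars <;> linarith

section Group

variable {G H : Type*} [AddCommGroup G] [AddCommGroup H]

/-- The Fourier transform `χ ↦ ∑ ν(x) χ(x)` of a real mass function on a discrete abelian group.
Characters take values in `Circle`, so the series converges as soon as `ν` is summable. -/
def charTransform (ν : G → ℝ) (χ : AddChar G Circle) : ℂ := ∑' x, (ν x : ℂ) * χ x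

lemma summable_norm_mul_char {ν : G → ℝ} (hν : Summable ν) (χ : AddChar G Circle) :
    Summable fun x ↦ ‖(ν x : ℂ) * χ x‖ := by
  simpa only [norm_mul, Circle.norm_coe, mul_one, Complex.norm_real] using hν.norm

lemma charTransform_add {ν ν' : G → ℝ} (hν : Summable ν) (hν' : Summable ν')
    (χ : AddChar G Circle) :
    charTransform (ν + ν') χ = charTransform ν χ + charTransform ν' χ := by
  simp only [charTransform, Pi.add_apply, Complex.ofReal_add, add_mul]
  exact (summable_norm_mul_char hν χ).of_norm.tsum_add (summable_norm_mul_char hν' χ).of_norm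

lemma charTransform_single [DecidableEq G] (h : G) (t : ℝ) (χ : AddChar G Circle) :
    charTransform (Pi.single h t) χ = t * χ h := by
  rw [charTransform, tsum_eq_single h fun x hx ↦ by simp [hx], Pi.single_eq_same]

lemma norm_charTransform_le {ν : G → ℝ} (hν0 : 0 ≤ ν) {s : ℝ} (hν : HasSum ν s)
    (χ : AddChar G Circle) : ‖charTransform ν χ‖ ≤ s :=
  tsum_of_norm_bounded hν fun x ↦ by
    rw [norm_mul, Circle.norm_coe, mul_one, Complex.norm_real, Real.norm_of_nonneg (hν0 x)]

lemma norm_charTransform_le_of_single_add_single_le [DecidableEq G] {ν : G → ℝ} {s t : ℝ}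
    (hν : HasSum ν s) (ht : 0 ≤ t) {h g : G} (hle : Pi.single h t + Pi.single g t ≤ ν)
    (χ : AddChar G Circle) :
    ‖charTransform ν χ‖ ≤ s - t * (2 - ‖1 + (χ (h - g) : ℂ)‖) := by
  set σ : G → ℝ := Pi.single h t + Pi.single g t with hσ_def
  have hσ : HasSum σ (t + t) := (hasSum_pi_single h t).add (hasSum_pi_single g t)
  have htransform : charTransform σ χ = t * (χ g * (1 + χ (h - g))) := by
    rw [hσ_def, charTransform_add (hasSum_pi_single h t).summable (hasSum_pi_single g t).summable,
      charTransform_single, charTransform_single, mul_add (χ g : ℂ), mul_one, ← Circle.coe_mul,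
      ← AddChar.map_add_eq_mul, add_sub_cancel, mul_add, add_comm]
  calc ‖charTransform ν χ‖ = ‖charTransform (ν - σ) χ + charTransform σ χ‖ := by
        rw [← charTransform_add (ν := ν - σ) (hν.sub hσ).summable hσ.summable, sub_add_cancel]
    _ ≤ ‖charTransform (ν - σ) χ‖ + ‖charTransform σ χ‖ := norm_add_le _ _
    _ ≤ (s - (t + t)) + t * ‖1 + (χ (h - g) : ℂ)‖ := by
        refine add_le_add (norm_charTransform_le (sub_nonneg.2 hle) (hν.sub hσ) χ) ?_
        rw [htransform, norm_mul, norm_mul, Circle.norm_coe, one_mul, Complex.norm_real,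
          Real.norm_of_nonneg ht]
    _ = s - t * (2 - ‖1 + (χ (h - g) : ℂ)‖) := by ring

lemma charTransform_tsum_mul_sub {a : G → ℝ} {b : H → ℝ} (ha : Summable a) (hb : Summable b)
    (f : G →+ H) (χ : AddChar H Circle) :
    charTransform (fun x ↦ ∑' y, a y * b (x - f y)) χ =
      charTransform a (χ.compAddMonoidHom f) * charTransform b χ := by
  rw [charTransform, charTransform, charTransform,
    ← (hasSum_tsum_mul_sub (summable_norm_mul_char ha _) (summable_norm_mul_char hb χ) f).tsum_eq]
  refine tsum_congr fun x ↦ ?_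
  rw [Complex.ofReal_tsum, ← tsum_mul_right]
  refine tsum_congr fun y ↦ ?_
  have hχ : (χ x : ℂ) = χ (f y) * χ (x - f y) := by
    rw [← Circle.coe_mul, ← AddChar.map_add_eq_mul, add_sub_cancel]
  rw [hχ, AddChar.compAddMonoidHom_apply, Complex.ofReal_mul]
  ring

lemma charTransform_tsum_fiber {ν : G → ℝ} (hν : Summable ν) (π : G →+ H)
    (χ : AddChar H Circle) :
    charTransform (fun x ↦ ∑' y : {y // π y = x}, ν y) χ =
      charTransform ν (χ.compAddMonoidHom π) := by
  rw [charTransform, charTransform,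
    ← ((summable_norm_mul_char hν _).of_norm.hasSum.tsum_fiberwise π).tsum_eq]
  refine tsum_congr fun x ↦ ?_
  rw [Complex.ofReal_tsum, ← tsum_mul_right]
  refine tsum_congr fun y ↦ ?_
  rw [AddChar.compAddMonoidHom_apply, y.2]

end Group

lemma re_toCircle (p : ℕ) [NeZero p] (w : ZMod p) :
    (ZMod.toCircle w : ℂ).re = Real.cos (2 * Real.pi * (w.valMinAbs / p)) := by
  nth_rw 1 [← ZMod.coe_valMinAbs w]
  rw [ZMod.toCircle_intCast, ← Complex.exp_ofReal_mul_I_re]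
  congr 2
  push_cast
  ring

lemma norm_one_add_toCircle_le {p : ℕ} [NeZero p] {w : ZMod p} {δ : ℝ} (hδ : 0 ≤ δ)
    (hw : δ * p ≤ |(w.valMinAbs : ℝ)|) : ‖1 + (ZMod.toCircle w : ℂ)‖ ≤ 2 - 4 * δ ^ 2 := by
  have hp : (0 : ℝ) < p := Nat.cast_pos.2 (NeZero.pos p)
  set r : ℝ := w.valMinAbs / p with hr
  have hδr : δ ≤ |r| := by rwa [hr, abs_div, abs_of_pos hp, le_div_iff₀ hp]
  have hr_half : |r| ≤ 1 / 2 := by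
    rw [hr, abs_div, abs_of_pos hp, div_le_iff₀ hp, abs_le]
    obtain ⟨hlo, hhi⟩ := ZMod.valMinAbs_mem_Ioc w
    have hlo' : -(p : ℝ) < w.valMinAbs * 2 := by exact_mod_cast hlo
    have hhi' : (w.valMinAbs * 2 : ℝ) ≤ p := by exact_mod_cast hhi
    constructor <;> linarith
  have hcos : Real.cos (2 * Real.pi * r) ≤ 1 - 8 * δ ^ 2 :=
    calc Real.cos (2 * Real.pi * r) ≤ 1 - 2 / Real.pi ^ 2 * (2 * Real.pi * r) ^ 2 :=
          Real.cos_le_one_sub_mul_cos_sq (by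
            rw [abs_mul, abs_of_pos Real.two_pi_pos]
            nlinarith [Real.pi_pos])
      _ = 1 - 8 * |r| ^ 2 := by rw [sq_abs]; field_simp; ring
      _ ≤ 1 - 8 * δ ^ 2 := by gcongr
  refine le_of_sq_le_sq ?_ (by nlinarith)
  calc ‖1 + (ZMod.toCircle w : ℂ)‖ ^ 2 = 2 + 2 * (ZMod.toCircle w : ℂ).re := by
        rw [Complex.sq_norm, Complex.normSq_add, Circle.normSq_coe]
        simp only [map_one, one_mul, Complex.conj_re]
        ring
    _ = 2 + 2 * Real.cos (2 * Real.pi * r) := by rw [re_toCircle]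
    _ ≤ (2 - 4 * δ ^ 2) ^ 2 := by nlinarith [sq_nonneg (δ ^ 2)]

end CharacterTransform

section FourierUpperBound

variable {G : Type*} [AddCommGroup G] [Fintype G]

lemma sum_norm_sq_sum_mul_addChar (f : G → ℂ) :
    ∑ ψ : AddChar G ℂ, ‖∑ x, f x * ψ x‖ ^ 2 = Fintype.card G * ∑ x, ‖f x‖ ^ 2 := by
  classical
  rw [← Complex.ofReal_inj]
  push_cast
  have hexpand (ψ : AddChar G ℂ) : (‖∑ x, f x * ψ x‖ : ℂ) ^ 2 =
      ∑ x, ∑ y, f x * starRingEnd ℂ (f y) * ψ (x - y) := by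
    rw [← Complex.mul_conj', map_sum, Finset.sum_mul_sum]
    refine Finset.sum_congr rfl fun x _ ↦ Finset.sum_congr rfl fun y _ ↦ ?_
    rw [map_mul, ← AddChar.map_neg_eq_conj, sub_eq_add_neg, AddChar.map_add_eq_mul]
    ring
  calc ∑ ψ : AddChar G ℂ, (‖∑ x, f x * ψ x‖ : ℂ) ^ 2
      = ∑ x, ∑ y, f x * starRingEnd ℂ (f y) * ∑ ψ : AddChar G ℂ, ψ (x - y) := by
        simp only [hexpand, Finset.mul_sum]
        rw [Finset.sum_comm]
        exact Finset.sum_congr rfl fun x _ ↦ Finset.sum_comm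
    _ = Fintype.card G * ∑ x, (‖f x‖ : ℂ) ^ 2 := by
        simp only [AddChar.sum_apply_eq_ite, sub_eq_zero, mul_ite, mul_zero, Finset.sum_ite_eq,
          Finset.mem_univ, if_true, Complex.mul_conj', Finset.sum_mul,
          mul_comm (Fintype.card G : ℂ)]

lemma sq_sum_abs_sub_inv_card_le {f : G → ℝ} (hf : ∑ x, f x = 1) {b : ℝ}
    (hb : ∀ χ : AddChar G Circle, χ ≠ 0 → ‖charTransform f χ‖ ≤ b) :
    (∑ x, |f x - (Fintype.card G : ℝ)⁻¹|) ^ 2 ≤ Fintype.card G * b ^ 2 := by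
  set g : G → ℝ := fun x ↦ f x - (Fintype.card G : ℝ)⁻¹ with hg
  have hg_transform (ψ : AddChar G ℂ) : ‖∑ x, (g x : ℂ) * ψ x‖ ^ 2 ≤ b ^ 2 := by
    rcases eq_or_ne ψ 0 with rfl | hψ
    · have hg_sum : ∑ x, (g x : ℂ) = 0 := by
        rw [← Complex.ofReal_sum, hg, Finset.sum_sub_distrib, hf]
        simp
      simpa [hg_sum] using sq_nonneg b
    · obtain ⟨χ, rfl⟩ := AddChar.circleEquivComplex.surjective ψ
      have hg_f : ∑ x, (g x : ℂ) * AddChar.circleEquivComplex χ x = charTransform f χ := by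
        simp only [hg, Complex.ofReal_sub, sub_mul, Finset.sum_sub_distrib, ← Finset.mul_sum,
          AddChar.sum_eq_zero_iff_ne_zero.2 hψ, mul_zero, sub_zero]
        exact (tsum_fintype _).symm
      rw [hg_f]
      gcongr
      exact hb χ (by rintro rfl; exact hψ (map_zero _))
  calc (∑ x, |g x|) ^ 2 ≤ Fintype.card G * ∑ x, |g x| ^ 2 := sq_sum_le_card_mul_sum_sq
    _ = ∑ ψ : AddChar G ℂ, ‖∑ x, (g x : ℂ) * ψ x‖ ^ 2 := by
        simp only [sum_norm_sq_sum_mul_addChar, Complex.norm_real, Real.norm_eq_abs]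
    _ ≤ Fintype.card (AddChar G ℂ) • b ^ 2 :=
        Finset.sum_le_card_nsmul _ _ _ fun ψ _ ↦ hg_transform ψ
    _ = Fintype.card G * b ^ 2 := by rw [AddChar.card_eq, nsmul_eq_mul]

lemma exists_toCircle_compAddMonoidHom_eq {ι : Type*} [Finite ι] {p : ℕ} [NeZero p]
    (χ : AddChar (ι → ZMod p) Circle) :
    ∃ θ : (ι → ZMod p) →+ ZMod p, ZMod.toCircle.compAddMonoidHom θ = χ := by
  classical
  cases nonempty_fintype ι
  let F (α : ι → ZMod p) : AddChar (ι → ZMod p) ℂ := AddChar.circleEquivComplex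
    (ZMod.toCircle.compAddMonoidHom (dotProductBilin (ZMod p) (ZMod p) α).toAddMonoidHom)
  have hF : Function.Injective F := fun α β hαβ ↦ by
    funext i
    have h := DFunLike.congr_fun (AddChar.circleEquivComplex.injective hαβ) (Pi.single i 1)
    simpa [dotProductBilin] using ZMod.injective_toCircle h
  obtain ⟨α, hα⟩ := ((Fintype.bijective_iff_injective_and_card F).2
    ⟨hF, AddChar.card_eq.symm⟩).surjective (AddChar.circleEquivComplex χ)
  exact ⟨_, AddChar.circleEquivComplex.injective hα⟩

end FourierUpperBound

section Chain

variable {k : ℕ} {A : Matrix (Fin k) (Fin k) ℤ} {μ : (Fin k → ℤ) → ℝ}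

lemma hasSum_chainDist (hμ : HasSum μ 1) (n : ℕ) : HasSum (chainDist A μ n) 1 := by
  induction n with
  | zero => exact hasSum_ite_eq 0 1
  | succ n ih =>
    have h := hasSum_tsum_mul_sub ih.summable.norm hμ.summable.norm A.mulVec
    rwa [ih.tsum_eq, hμ.tsum_eq, one_mul] at h

lemma charTransform_chainDist (hμ : HasSum μ 1) (n : ℕ) (χ : AddChar (Fin k → ℤ) Circle) :
    charTransform (chainDist A μ n) χ =
      ∏ j ∈ Finset.range n,
        charTransform μ (χ.compAddMonoidHom (A ^ j).mulVecLin.toAddMonoidHom) := by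
  induction n generalizing χ with
  | zero =>
    have hzero : chainDist A μ 0 = Pi.single 0 1 := by
      funext x
      simp only [chainDist, Pi.single_apply]
    rw [hzero, charTransform_single, AddChar.map_zero_eq_one]
    simp
  | succ n ih =>
    have hstep := charTransform_tsum_mul_sub (hasSum_chainDist (A := A) hμ n).summable hμ.summable
      A.mulVecLin.toAddMonoidHom χ
    refine hstep.trans ?_
    rw [ih, Finset.prod_range_succ']
    congr! 2 with j
    · congr 1
      ext x
      simp [pow_succ']
    · ext x
      simp

lemma sum_chainDistMod {p : ℕ} [NeZero p] (hμ : HasSum μ 1) (n : ℕ) :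
    ∑ x, chainDistMod A μ p n x = 1 :=
  (hasSum_fintype _).unique ((hasSum_chainDist hμ n).tsum_fiberwise fun y i ↦ (y i : ZMod p))

lemma charTransform_chainDistMod {p : ℕ} (hμ : HasSum μ 1) (n : ℕ)
    (χ : AddChar (Fin k → ZMod p) Circle) :
    charTransform (chainDistMod A μ p n) χ = charTransform (chainDist A μ n)
      (χ.compAddMonoidHom ((Int.castAddHom (ZMod p)).compLeft (Fin k))) :=
  charTransform_tsum_fiber (hasSum_chainDist hμ n).summable
    ((Int.castAddHom (ZMod p)).compLeft (Fin k)) χ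

theorem sq_two_mul_tvDist_le {p : ℕ} [NeZero p] (hμ : HasSum μ 1) {n : ℕ} {b : ℝ}
    (hb : ∀ θ : (Fin k → ℤ) →+ ZMod p, θ ≠ 0 →
      ‖charTransform (chainDist A μ n) (ZMod.toCircle.compAddMonoidHom θ)‖ ≤ b) :
    (2 * tvDist A μ p n) ^ 2 ≤ (p : ℝ) ^ k * b ^ 2 := by
  have hcard : (Fintype.card (Fin k → ZMod p) : ℝ) = (p : ℝ) ^ k := by simp [ZMod.card]
  have htv : 2 * tvDist A μ p n =
      ∑ x, |chainDistMod A μ p n x - (Fintype.card (Fin k → ZMod p) : ℝ)⁻¹| := by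
    rw [tvDist, tsum_fintype, unif, hcard]
    ring
  rw [htv, ← hcard]
  refine sq_sum_abs_sub_inv_card_le (sum_chainDistMod hμ n) fun χ hχ ↦ ?_
  obtain ⟨θ, rfl⟩ := exists_toCircle_compAddMonoidHom_eq χ
  rw [charTransform_chainDistMod hμ]
  refine hb (θ.comp ((Int.castAddHom (ZMod p)).compLeft (Fin k))) fun hθ ↦ hχ ?_
  have hsurj : Function.Surjective ((Int.castAddHom (ZMod p)).compLeft (Fin k)) :=
    ZMod.intCast_surjective.comp_left
  rw [(AddMonoidHom.cancel_right hsurj (g₂ := 0)).1 hθ]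
  ext x
  simp

end Chain

section Numerics

lemma pow_div_le_inv_mul_rpow {β : ℝ} (hβ0 : 0 < β) (hβ1 : β ≤ 1) (n m : ℕ) :
    β ^ (n / m) ≤ β⁻¹ * β ^ ((n : ℝ) / m) := by
  rw [← Real.rpow_natCast, ← Real.rpow_neg_one, ← Real.rpow_add hβ0]
  refine Real.rpow_le_rpow_of_exponent_ge hβ0 hβ1 ?_
  rw [← Nat.floor_div_eq_div (K := ℝ)]
  linarith [Nat.lt_floor_add_one ((n : ℝ) / m)]

lemma natLog_two_add_one_le {p : ℕ} (hp : 2 ≤ p) :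
    (Nat.log 2 p + 1 : ℝ) ≤ 2 / Real.log 2 * Real.log p := by
  have hlog2 : 0 < Real.log 2 := Real.log_pos one_lt_two
  have hnatLog : (Nat.log 2 p : ℝ) ≤ Real.log p / Real.log 2 := Real.natLog_le_logb p 2
  have hone : 1 ≤ Real.log p / Real.log 2 :=
    (one_le_div hlog2).2 (Real.log_le_log two_pos (by exact_mod_cast hp))
  calc (Nat.log 2 p + 1 : ℝ) ≤ Real.log p / Real.log 2 + Real.log p / Real.log 2 := by gcongr
    _ = 2 / Real.log 2 * Real.log p := by ring

lemma exists_pow_div_natLog_le {β : ℝ} (hβ0 : 0 < β) (hβ1 : β < 1) {T : ℕ} (hT : 0 < T)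
    (r : ℕ) :
    ∃ c : ℝ, 0 < c ∧ ∀ p n : ℕ, 0 < p → c * Real.log p ^ 2 ≤ n →
      β ^ (n / (T * (Nat.log 2 p + 1))) ≤ β⁻¹ / (p : ℝ) ^ r := by
  have hlogβ : 0 < -Real.log β := neg_pos.2 (Real.log_neg hβ0 hβ1)
  set C : ℝ := r / -Real.log β with hC
  refine ⟨C * (T * (2 / Real.log 2)) + 1, by positivity, fun p n hp hn ↦ ?_⟩
  have hp0 : (0 : ℝ) < p := Nat.cast_pos.2 hp
  rcases Nat.eq_or_lt_of_le hp with rfl | hp2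
  · simpa using (pow_le_one₀ hβ0.le hβ1.le).trans ((one_le_inv₀ hβ0).2 hβ1.le)
  have hlogp : 0 < Real.log p := Real.log_pos (by exact_mod_cast hp2)
  have hexp : C * Real.log p ≤ n / (T * (Nat.log 2 p + 1) : ℕ) := by
    rw [le_div_iff₀ (Nat.cast_pos.2 (by positivity))]
    push_cast
    have := natLog_two_add_one_le hp2
    calc C * Real.log p * (T * (Nat.log 2 p + 1))
        ≤ C * Real.log p * (T * (2 / Real.log 2 * Real.log p)) := by gcongr
      _ ≤ (C * (T * (2 / Real.log 2)) + 1) * Real.log p ^ 2 := by nlinarith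
      _ ≤ n := hn
  calc β ^ (n / (T * (Nat.log 2 p + 1)))
      ≤ β⁻¹ * β ^ ((n : ℝ) / (T * (Nat.log 2 p + 1) : ℕ)) :=
        pow_div_le_inv_mul_rpow hβ0 hβ1.le _ _
    _ ≤ β⁻¹ * β ^ (C * Real.log p) := by
        gcongr ?_ * ?_
        exact Real.rpow_le_rpow_of_exponent_ge hβ0 hβ1.le hexp
    _ = β⁻¹ / (p : ℝ) ^ r := by
        rw [Real.rpow_def_of_pos hβ0, ← Real.rpow_natCast, Real.rpow_def_of_pos hp0, div_eq_mul_inv,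
          ← Real.exp_neg, hC]
        congr 2
        have : Real.log β ≠ 0 := (Real.log_neg hβ0 hβ1).ne
        field_simp

lemma exists_pos_forall_le {ι : Type*} [Finite ι] {f : ι → ℝ} (hf : ∀ j, 0 < f j) :
    ∃ t, 0 < t ∧ ∀ j, t ≤ f j :=
  ((eventually_mem_nhdsWithin (s := Set.Ioi (0 : ℝ))).and
    (Filter.eventually_all.2 fun j ↦ Ioc_mem_nhdsGT (hf j))).exists.imp
    fun _ h ↦ ⟨h.1, fun j ↦ (h.2 j).2⟩

end Numerics

section Equidistribution

variable {k : ℕ} {A : Matrix (Fin k) (Fin k) ℤ} {μ : (Fin k → ℤ) → ℝ}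

theorem exists_norm_charTransform_chainDist_le
    (hA : ∀ z : ℂ, Polynomial.aeval z A.charpoly = 0 → ‖z‖ ≠ 1)
    (hμ0 : 0 ≤ μ) (hμ1 : HasSum μ 1) {y : Fin k → Fin k → ℤ}
    (hy : ∀ j, ∃ x ∈ Vset μ, ∃ m : ℕ, y j = A ^ m *ᵥ x) :
    ∃ β : ℝ, 0 < β ∧ β < 1 ∧ ∃ T : ℕ, 0 < T ∧ ∀ (p : ℕ) [NeZero p], IsUnit (A.det : ZMod p) →
      IsUnit ((colMat y).det : ZMod p) → ∀ θ : (Fin k → ℤ) →+ ZMod p, θ ≠ 0 → ∀ n : ℕ,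
      ‖charTransform (chainDist A μ n) (ZMod.toCircle.compAddMonoidHom θ)‖ ≤
        β ^ (n / (T * (Nat.log 2 p + 1))) := by
  obtain ⟨δ, hδ, T, hT⟩ := exists_le_valMinAbs_orbit A (colMat y) hA
  choose x hx m hy using hy
  choose h g hh hg hx using hx
  obtain ⟨t, ht, hth⟩ := exists_pos_forall_le
    (f := fun j ↦ min (μ (h j)) (μ (g j)) / 2) fun j ↦ half_pos
      (lt_min ((hμ0 _).lt_of_ne' (hh j)) ((hμ0 _).lt_of_ne' (hg j)))
  refine ⟨max (1 - 4 * t * δ ^ 2) 2⁻¹, by positivity,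
    max_lt (sub_lt_self 1 (by positivity)) (by norm_num), T + ∑ j, m j + 1, by positivity,
    fun p _ hAp hyp θ hθ n ↦ ?_⟩
  rw [charTransform_chainDist hμ1, norm_prod]
  refine prod_range_le_pow_div (fun j ↦ norm_nonneg _) (fun j ↦ norm_charTransform_le hμ0 hμ1 _)
    (fun s ↦ ?_) n
  obtain ⟨i, hi, j, hfar⟩ := hT p hAp hyp θ hθ s
  refine ⟨i + m j, ?_, le_max_of_le_left ?_⟩
  · have hm : m j ≤ (∑ j, m j) * (Nat.log 2 p + 1) :=
      (Finset.single_le_sum (fun j _ ↦ Nat.zero_le (m j)) (Finset.mem_univ j)).trans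
        (Nat.le_mul_of_pos_right _ (Nat.succ_pos _))
    linarith
  · have hdiff : A ^ (s + (i + m j)) *ᵥ (h j - g j) = A ^ (s + i) *ᵥ (colMat y).col j := by
      rw [← hx, ← add_assoc, pow_add, ← Matrix.mulVec_mulVec, ← hy]
      rfl
    refine (norm_charTransform_le_of_single_add_single_le hμ1 ht.le (single_add_single_le hμ0
      (by linarith [hth j, min_le_left (μ (h j)) (μ (g j))])
      (by linarith [hth j, min_le_right (μ (h j)) (μ (g j))])) _).trans ?_
    have hw := norm_one_add_toCircle_le hδ.le (hdiff ▸ hfar)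
    simp only [AddChar.compAddMonoidHom_apply, LinearMap.toAddMonoidHom_coe,
      Matrix.mulVecLin_apply]
    nlinarith

theorem uniformity_ln_sq_general
    (hEig : ∀ lam : ℂ, (A.map (Int.cast : ℤ → ℂ)).charpoly.IsRoot lam → ‖lam‖ ≠ 1)
    (hμ0 : ∀ x, 0 ≤ μ x) (hμ1 : HasSum μ 1) {y : Fin k → Fin k → ℤ}
    (hy : ∀ j, ∃ x ∈ Vset μ, ∃ m : ℕ, y j = A ^ m *ᵥ x) (r : ℕ) :
    ∃ c C : ℝ, 0 < c ∧ ∀ p : ℕ, 0 < p → Int.gcd A.det p = 1 → Int.gcd (colMat y).det p = 1 →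
      ∀ n : ℕ, c * Real.log p ^ 2 ≤ n → tvDist A μ p n ≤ C / (p : ℝ) ^ r := by
  have hA (z : ℂ) (hz : Polynomial.aeval z A.charpoly = 0) : ‖z‖ ≠ 1 := hEig z (by
    rwa [← Polynomial.eval_map_algebraMap, ← A.charpoly_map (algebraMap ℤ ℂ)] at hz)
  obtain ⟨β, hβ0, hβ1, T, hT, hβ⟩ := exists_norm_charTransform_chainDist_le hA hμ0 hμ1 hy
  obtain ⟨c, hc, hcβ⟩ := exists_pow_div_natLog_le hβ0 hβ1 hT (k + r)
  refine ⟨c, β⁻¹, hc, fun p hp hAp hyp n hn ↦ ?_⟩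
  have : NeZero p := ⟨hp.ne'⟩
  have isUnit_of_gcd (a : ℤ) (ha : Int.gcd a p = 1) : IsUnit (a : ZMod p) :=
    (ZMod.coe_int_isUnit_iff_isCoprime a p).2 (Int.isCoprime_iff_gcd_eq_one.2 ha).symm
  have htv := sq_two_mul_tvDist_le hμ1 (n := n) fun θ hθ ↦
    (hβ p (isUnit_of_gcd _ hAp) (isUnit_of_gcd _ hyp) θ hθ n).trans (hcβ p n hp hn)
  have hp1 : (1 : ℝ) ≤ (p : ℝ) ^ k := one_le_pow₀ (by exact_mod_cast hp)
  have hC : 0 ≤ β⁻¹ / (p : ℝ) ^ r := by positivity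
  have htv2 : 2 * tvDist A μ p n ≤ β⁻¹ / (p : ℝ) ^ r := by
    refine le_of_sq_le_sq (htv.trans ?_) hC
    calc (p : ℝ) ^ k * (β⁻¹ / (p : ℝ) ^ (k + r)) ^ 2
        = (β⁻¹ / (p : ℝ) ^ r) ^ 2 / (p : ℝ) ^ k := by field_simp; ring
      _ ≤ (β⁻¹ / (p : ℝ) ^ r) ^ 2 := div_le_self (sq_nonneg _) hp1
  linarith

end Equidistribution

/-- **Theorem 3.1**: if all (complex) eigenvalues `λ` of `A` are nonzero and satisfy
`|λ| ≠ 1`, and the support of `μ` is not parallel to a proper subspace of `ℚ^k` invariant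
under `A`, then there is `c > 0` such that for all `p` with
`gcd(det A, p) = gcd(det B, p) = 1` and all `n ≥ c (ln p)²`, `‖P_n − U‖ ≤ ε(p)` where
`ε(p) → 0` as `p → ∞`. -/
theorem uniformity_ln_sq (k : ℕ) (hk : 1 ≤ k)
    (A : Matrix (Fin k) (Fin k) ℤ) (hA : A.det ≠ 0)
    (hEig : ∀ lam : ℂ, (A.map (Int.cast : ℤ → ℂ)).charpoly.IsRoot lam →
      lam ≠ 0 ∧ ‖lam‖ ≠ 1)
    (μ : (Fin k → ℤ) → ℝ) (hμ0 : ∀ x, 0 ≤ μ x) (hμ1 : HasSum μ 1)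
    (hpar : ¬ ParallelInv A μ)
    (y : Fin k → (Fin k → ℤ)) (hy : ∀ j, y j ∈ VdSet A μ)
    (hybasis : (colMat y).det ≠ 0) :
    ∃ (c : ℝ) (ε : ℕ → ℝ), 0 < c ∧ Filter.Tendsto ε Filter.atTop (nhds 0) ∧
      ∀ p : ℕ, 0 < p → Int.gcd A.det p = 1 → Int.gcd (colMat y).det p = 1 →
        ∀ n : ℕ, c * (Real.log p) ^ 2 ≤ n → tvDist A μ p n ≤ ε p := by
  obtain ⟨c, C, hc, h⟩ := uniformity_ln_sq_general (fun z hz ↦ (hEig z hz).2) hμ0 hμ1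
    (fun j ↦ (hy j).imp fun _ ⟨hx, m, _, hm⟩ ↦ ⟨hx, m, hm⟩) 1
  exact ⟨c, fun p ↦ C / (p : ℝ) ^ 1, hc, by simpa using tendsto_const_div_atTop_nhds_zero_nat C, h⟩
end
end

section
/- Assume A has complex eigenvalues λ_1, …, λ_k, all nonzero, with |λ_i| ≠ 1 for every i. Then there exist δ ∈ (0, 1/2), a constant c̄ > 0, and N ∈ ℕ such that for every integer p > N with gcd(det(A), p) = 1 and every α ∈ (ℤ/pℤ)^k with α ≠ 0, there exists a positive integer j̄ ≤ c̄·ln p such that the vector of fractional parts of ᵗA^{j̄} α / p has at least one component in the interval [δ, 1−δ]. -/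
open scoped BigOperators
open Matrix

noncomputable section

/-!
Reducing `ᵗA α` modulo `p` to integers of absolute value at most `p / 2` gives a nonzero integer
vector `w`. As long as the orbit `ᵗA ^ n w` stays of size at most `p / 2`, its entries are the
centred residues of `ᵗA ^ (n + 1) α`, and one step multiplies the norm by at most `‖ᵗA‖`; so the
orbit cannot grow past `p` without first having a norm in `[δ p, p / 2]`, which is the claim.

It remains to see that the orbit of a nonzero integer vector `w` reaches size `p` within `O(log p)`
steps. Choose `s` such that `|λ| ^ s ≥ 2` for every eigenvalue with `|λ| > 1`. If the first `T`
iterates of `w` under `B = ᵗA ^ s` had norm at most `M`, the `2 ^ T` sums `∑ i ∈ S, B ^ i w` with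
`S ⊆ {0, …, T - 1}` would lie in a box with `(2 T M + 1) ^ k` integer points. For `T` a large
multiple of `log M` two of them agree, so `P(B) w = 0` for a nonzero polynomial `P` with
coefficients in `{-1, 0, 1}`, and `P(λ ^ s) = 0` for some eigenvalue `λ`. The same holds for all
conjugates of `λ`, one of which lies outside the unit disc by Kronecker's theorem, whereas every
root of `P` has absolute value less than `2`.
-/

section IntegerPolynomials

open Polynomial

theorem norm_lt_two_of_abs_coeff_le_one {P : ℤ[X]} (hP : P ≠ 0) (hcoeff : ∀ n, |P.coeff n| ≤ 1)
    {z : ℂ} (hz : aeval z P = 0) : ‖z‖ < 2 := by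
  set Q : ℂ[X] := P.map (Int.castRingHom ℂ) with hQ
  have hinj : Function.Injective (Int.castRingHom ℂ) := (Int.castRingHom ℂ).injective_int
  have hcoeffQ : ∀ n, ‖Q.coeff n‖₊ ≤ 1 := fun n ↦ by
    rw [← NNReal.coe_le_coe, coe_nnnorm, NNReal.coe_one, hQ, coeff_map, eq_intCast,
      Complex.norm_intCast, ← Int.cast_abs]
    exact_mod_cast hcoeff n
  have hlead : 1 ≤ ‖Q.leadingCoeff‖₊ := by
    rw [← NNReal.coe_le_coe, coe_nnnorm, NNReal.coe_one, hQ, leadingCoeff_map_of_injective hinj,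
      eq_intCast, Complex.norm_intCast, ← Int.cast_abs]
    exact_mod_cast Int.one_le_abs (leadingCoeff_ne_zero.mpr hP)
  have hbound : Q.cauchyBound ≤ 1 + 1 :=
    add_le_add_left (div_le_one_of_le₀ ((Finset.sup_le fun n _ ↦ hcoeffQ n).trans hlead)
      zero_le) 1
  have hroot : Q.IsRoot z := by rwa [IsRoot.def, hQ, eval_map, ← algebraMap_int_eq]
  have hlt := (hroot.norm_lt_cauchyBound ((Polynomial.map_ne_zero_iff hinj).mpr hP)).trans_le hbound
  rw [one_add_one_eq_two] at hlt
  exact_mod_cast hlt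

theorem exists_root_minpoly_one_lt_norm {z : ℂ} (hint : IsIntegral ℤ z) (hz : z ≠ 0)
    (hfin : ¬ IsOfFinOrder z) : ∃ y : ℂ, aeval y (minpoly ℤ z) = 0 ∧ 1 < ‖y‖ := by
  by_contra! hle
  have hmonic := minpoly.monic hint
  have hmahler : ((minpoly ℤ z).map (Int.castRingHom ℂ)).mahlerMeasure = 1 := by
    rw [mahlerMeasure_eq_leadingCoeff_mul_prod_roots, (hmonic.map _).leadingCoeff, norm_one,
      one_mul]
    refine Multiset.prod_eq_one fun m hm ↦ ?_
    obtain ⟨y, hy, rfl⟩ := Multiset.mem_map.mp hm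
    exact max_eq_left (hle y ((mem_aroots'.mp hy).2))
  exact hfin (isOfFinOrder_iff_pow_eq_one.mpr (pow_eq_one_of_mahlerMeasure_eq_one hmahler hz
    (mem_aroots.mpr ⟨hmonic.ne_zero, minpoly.aeval ℤ z⟩)))

theorem exists_two_le_norm_pow {E : Type*} [Norm E] (s : Finset E) :
    ∃ n : ℕ, ∀ z ∈ s, 1 < ‖z‖ → 2 ≤ ‖z‖ ^ n := by
  have hlarge : ∀ z ∈ s, ∀ᶠ n : ℕ in Filter.atTop, 1 < ‖z‖ → 2 ≤ ‖z‖ ^ n := fun z _ ↦ by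
    by_cases hz : 1 < ‖z‖
    · filter_upwards [(tendsto_pow_atTop_atTop_of_one_lt hz).eventually_ge_atTop 2] with n hn _
      exact hn
    · exact .of_forall fun n h ↦ absurd h hz
  exact ((Filter.eventually_all_finset s).mpr hlarge).exists

end IntegerPolynomials

section IntegerMatrices

open Polynomial

theorem norm_sum_le_of_subset_range {E : Type*} [SeminormedAddCommGroup E] {v : ℕ → E} {T M : ℕ}
    (hM : ∀ i < T, ‖v i‖ ≤ M) {S : Finset ℕ} (hS : S ⊆ Finset.range T) :
    ‖∑ i ∈ S, v i‖ ≤ (T * M : ℕ) := by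
  have hcard : S.card ≤ T := (Finset.card_le_card hS).trans_eq (Finset.card_range T)
  calc ‖∑ i ∈ S, v i‖ ≤ S.card • (M : ℝ) :=
        (norm_sum_le _ _).trans (Finset.sum_le_card_nsmul _ _ _
          fun i hi ↦ hM i (Finset.mem_range.mp (hS hi)))
    _ ≤ (T * M : ℕ) := by
      rw [nsmul_eq_mul]
      exact_mod_cast Nat.mul_le_mul_right M hcard

theorem mem_Icc_of_norm_le {ι : Type*} [Fintype ι] {v : ι → ℤ} {R : ℕ} (hv : ‖v‖ ≤ R) :
    v ∈ Set.Icc (fun _ ↦ -(R : ℤ)) fun _ ↦ (R : ℤ) := by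
  have habs : ∀ j, |v j| ≤ (R : ℤ) := fun j ↦ by
    exact_mod_cast (Int.norm_eq_abs _).symm.trans_le ((norm_le_pi_norm v j).trans hv)
  exact ⟨fun j ↦ (abs_le.mp (habs j)).1, fun j ↦ (abs_le.mp (habs j)).2⟩

variable {ι : Type*} [Fintype ι] [DecidableEq ι]

theorem exists_isRoot_charpoly_of_det_aeval_eq_zero {K : Type*} [Field K] [IsAlgClosed K]
    {A : Matrix ι ι K} {Q : K[X]} (h : (aeval A Q).det = 0) :
    ∃ z, A.charpoly.IsRoot z ∧ Q.IsRoot z := by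
  have hι : Nonempty ι := by
    by_contra hempty
    rw [not_nonempty_iff] at hempty
    exact one_ne_zero ((det_isEmpty (A := aeval A Q)).symm.trans h)
  have hmem : (0 : K) ∈ spectrum K (aeval A Q) := by
    rw [spectrum.zero_mem_iff, isUnit_iff_isUnit_det, h]
    exact not_isUnit_zero
  rw [spectrum.map_polynomial_aeval_of_nonempty A Q
    (spectrum.nonempty_of_isAlgClosed_of_finiteDimensional K A)] at hmem
  obtain ⟨z, hz, hQz⟩ := hmem
  exact ⟨z, mem_spectrum_iff_isRoot_charpoly.mp hz, hQz⟩

theorem isRoot_charpoly_map_intCast_iff {A : Matrix ι ι ℤ} {z : ℂ} :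
    (A.map (Int.cast : ℤ → ℂ)).charpoly.IsRoot z ↔ aeval z A.charpoly = 0 := by
  change (A.map (Int.castRingHom ℂ)).charpoly.IsRoot z ↔ _
  rw [charpoly_map, IsRoot.def, eval_map, ← algebraMap_int_eq, aeval_def]

theorem exists_aeval_charpoly_eq_zero_of_det_aeval_eq_zero {A : Matrix ι ι ℤ} {Q : ℤ[X]}
    (h : (aeval A Q).det = 0) : ∃ z : ℂ, aeval z A.charpoly = 0 ∧ aeval z Q = 0 := by
  have hmap : aeval (A.map (Int.castRingHom ℂ)) (Q.map (Int.castRingHom ℂ)) =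
      (aeval A Q).map (Int.castRingHom ℂ) := by
    rw [← algebraMap_int_eq, aeval_map_algebraMap]
    exact aeval_algHom_apply (Algebra.ofId ℤ ℂ).mapMatrix A Q
  have hdet : (aeval (A.map (Int.castRingHom ℂ)) (Q.map (Int.castRingHom ℂ))).det = 0 := by
    rw [hmap]
    exact ((Int.castRingHom ℂ).map_det _).symm.trans (by rw [h, map_zero])
  obtain ⟨z, hA, hQ⟩ := exists_isRoot_charpoly_of_det_aeval_eq_zero hdet
  rw [IsRoot.def, eval_map] at hQ
  exact ⟨z, isRoot_charpoly_map_intCast_iff.mp hA, hQ⟩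

theorem ne_zero_of_aeval_charpoly_eq_zero {A : Matrix ι ι ℤ} (hA : A.det ≠ 0) {z : ℂ}
    (hz : aeval z A.charpoly = 0) : z ≠ 0 := by
  rintro rfl
  rw [aeval_def, eval₂_at_zero, algebraMap_int_eq, eq_intCast, Int.cast_eq_zero] at hz
  exact hA (by rw [det_eq_sign_charpoly_coeff, hz, mul_zero])

theorem exists_pow_det_aeval_ne_zero {A : Matrix ι ι ℤ} (hA : A.det ≠ 0)
    (hroot : ∀ z : ℂ, aeval z A.charpoly = 0 → ¬ IsOfFinOrder z) :
    ∃ s : ℕ, ∀ P : ℤ[X], P ≠ 0 → (∀ n, |P.coeff n| ≤ 1) → (aeval (A ^ s) P).det ≠ 0 := by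
  obtain ⟨s, hs⟩ := exists_two_le_norm_pow (A.charpoly.aroots ℂ).toFinset
  refine ⟨s, fun P hP hcoeff hdet ↦ ?_⟩
  rw [← expand_aeval] at hdet
  obtain ⟨z, hzA, hzP⟩ := exists_aeval_charpoly_eq_zero_of_det_aeval_eq_zero hdet
  -- `z` itself may lie inside the unit disc, but then some conjugate `y` of it lies outside.
  have hint : IsIntegral ℤ z := ⟨A.charpoly, A.charpoly_monic, hzA⟩
  have hz0 : z ≠ 0 := ne_zero_of_aeval_charpoly_eq_zero hA hzA
  obtain ⟨y, hy, hnorm⟩ := exists_root_minpoly_one_lt_norm hint hz0 (hroot z hzA)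
  have hroot_of_root : ∀ Q : ℤ[X], aeval z Q = 0 → aeval y Q = 0 := fun Q hQ ↦
    aeval_eq_zero_of_dvd_aeval_eq_zero (minpoly.isIntegrallyClosed_dvd hint hQ) hy
  have hlarge : 2 ≤ ‖y‖ ^ s :=
    hs y (Multiset.mem_toFinset.mpr
      (mem_aroots.mpr ⟨A.charpoly_monic.ne_zero, hroot_of_root _ hzA⟩)) hnorm
  have hsmall : ‖y ^ s‖ < 2 :=
    norm_lt_two_of_abs_coeff_le_one hP hcoeff (by rw [← expand_aeval, hroot_of_root _ hzP])
  rw [norm_pow] at hsmall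
  exact hsmall.not_ge hlarge

theorem injective_sum_pow_mulVec {B : Matrix ι ι ℤ}
    (hB : ∀ P : ℤ[X], P ≠ 0 → (∀ n, |P.coeff n| ≤ 1) → (aeval B P).det ≠ 0)
    {w : ι → ℤ} (hw : w ≠ 0) :
    Function.Injective fun S : Finset ℕ ↦ ∑ i ∈ S, B ^ i *ᵥ w := by
  intro S S' hSS'
  let P : ℤ[X] := ∑ i ∈ S, X ^ i - ∑ i ∈ S', X ^ i
  have hcoeff : ∀ n, P.coeff n = (if n ∈ S then 1 else 0) - if n ∈ S' then 1 else 0 := fun n ↦ by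
    simp [P, coeff_X_pow]
  have hPw : aeval B P *ᵥ w = 0 := by
    simp only [P, map_sub, map_sum, map_pow, aeval_X, sub_mulVec, sum_mulVec]
    exact sub_eq_zero.mpr hSS'
  have hP : P = 0 := by
    by_contra hP
    refine hB P hP (fun n ↦ ?_) (exists_mulVec_eq_zero_iff.mp ⟨w, hw, hPw⟩)
    rw [hcoeff]
    split_ifs <;> simp
  ext n
  have hn := hcoeff n
  rw [hP, coeff_zero] at hn
  grind

theorem two_pow_le_of_norm_pow_mulVec_le {B : Matrix ι ι ℤ}
    (hB : ∀ P : ℤ[X], P ≠ 0 → (∀ n, |P.coeff n| ≤ 1) → (aeval B P).det ≠ 0)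
    {w : ι → ℤ} (hw : w ≠ 0) {T M : ℕ} (hM : ∀ i < T, ‖B ^ i *ᵥ w‖ ≤ M) :
    2 ^ T ≤ (2 * (T * M) + 1) ^ Fintype.card ι := by
  let box : Finset (ι → ℤ) := Finset.Icc (fun _ ↦ -((T * M : ℕ) : ℤ)) fun _ ↦ ((T * M : ℕ) : ℤ)
  calc 2 ^ T = (Finset.range T).powerset.card := by
        rw [Finset.card_powerset, Finset.card_range]
    _ ≤ box.card := Finset.card_le_card_of_injOn (fun S ↦ ∑ i ∈ S, B ^ i *ᵥ w)
        (fun S hS ↦ Finset.mem_Icc.mpr (mem_Icc_of_norm_le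
          (norm_sum_le_of_subset_range hM (Finset.mem_powerset.mp hS))))
        (injective_sum_pow_mulVec hB hw).injOn
    _ = (2 * (T * M) + 1) ^ Fintype.card ι := by
      simp only [box, Pi.card_Icc, Int.card_Icc, Finset.prod_const, Finset.card_univ]
      congr 1
      omega

theorem exists_forall_pow_lt_two_pow (k : ℕ) :
    ∃ c : ℕ, ∀ L : ℕ, (2 * (c * (L + 1) * 2 ^ L) + 1) ^ k < 2 ^ (c * (L + 1)) := by
  -- The base on the left is at most `2 ^ ((b + 2) * (L + 1))` when `c = 2 ^ b`.
  set b := 2 * k + 2 with hb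
  have hexp : (b + 2) * k < 2 ^ b := by
    have hk : k < 2 ^ k := Nat.lt_two_pow_self
    have hb2 : b + 2 ≤ 2 ^ (k + 2) := by
      rw [hb, pow_add]
      omega
    calc (b + 2) * k < 2 ^ (k + 2) * 2 ^ k := Nat.mul_lt_mul_of_le_of_lt hb2 hk (by positivity)
      _ = 2 ^ b := by rw [← pow_add]; congr 1; omega
  refine ⟨2 ^ b, fun L ↦ ?_⟩
  have hL : L + 1 ≤ 2 ^ L := Nat.lt_two_pow_self
  have hbase : 2 * (2 ^ b * (L + 1) * 2 ^ L) + 1 ≤ 2 ^ ((b + 2) * (L + 1)) := calc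
    2 * (2 ^ b * (L + 1) * 2 ^ L) + 1 ≤ 2 * (2 ^ b * 2 ^ L * 2 ^ L) + 2 ^ (b + 1 + 2 * L) := by
      gcongr
      exact Nat.one_le_two_pow
    _ = 2 ^ (b + 2 + 2 * L) := by ring
    _ ≤ 2 ^ ((b + 2) * (L + 1)) := by
      gcongr
      · norm_num
      · nlinarith [Nat.zero_le (b * L)]
  calc (2 * (2 ^ b * (L + 1) * 2 ^ L) + 1) ^ k ≤ (2 ^ ((b + 2) * (L + 1))) ^ k := by gcongr
    _ = 2 ^ ((b + 2) * k * (L + 1)) := by rw [← pow_mul]; congr 1; ring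
    _ < 2 ^ (2 ^ b * (L + 1)) := by gcongr; norm_num

theorem exists_two_pow_le_norm_pow_mulVec {A : Matrix ι ι ℤ} (hA : A.det ≠ 0)
    (hroot : ∀ z : ℂ, aeval z A.charpoly = 0 → ¬ IsOfFinOrder z) :
    ∃ c : ℕ, ∀ w : ι → ℤ, w ≠ 0 → ∀ L : ℕ, ∃ n ≤ c * (L + 1), 2 ^ L ≤ ‖A ^ n *ᵥ w‖ := by
  obtain ⟨s, hs⟩ := exists_pow_det_aeval_ne_zero hA hroot
  obtain ⟨c, hc⟩ := exists_forall_pow_lt_two_pow (Fintype.card ι)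
  refine ⟨s * c, fun w hw L ↦ ?_⟩
  by_contra! hsmall
  have hbounded : ∀ i < c * (L + 1), ‖(A ^ s) ^ i *ᵥ w‖ ≤ (2 ^ L : ℕ) := fun i hi ↦ by
    rw [← pow_mul]
    exact_mod_cast (hsmall _ ((Nat.mul_le_mul_left s hi.le).trans_eq (mul_assoc _ _ _).symm)).le
  exact (two_pow_le_of_norm_pow_mulVec_le hs hw hbounded).not_gt (hc L)

end IntegerMatrices

section Residues

theorem fract_mem_Icc_of_le_abs {x δ : ℝ} (hδ : δ ≤ |x|) (hx : |x| ≤ 1 / 2) :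
    Int.fract x ∈ Set.Icc δ (1 - δ) := by
  rcases le_or_gt 0 x with h | h
  · rw [abs_of_nonneg h] at hδ hx
    rw [Int.fract_eq_self.mpr ⟨h, by linarith⟩]
    constructor <;> linarith
  · rw [abs_of_neg h] at hδ hx
    rw [← Int.fract_add_one, Int.fract_eq_self.mpr ⟨by linarith, by linarith⟩]
    constructor <;> linarith

theorem fract_div_mem_Icc_of_intCast_eq {p : ℕ} [NeZero p] {y z : ℤ}
    (hyz : (z : ZMod p) = y) {δ : ℝ} (hδ : δ * p ≤ |(y : ℝ)|) (hy : |(y : ℝ)| ≤ p / 2) :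
    Int.fract ((z : ℝ) / p) ∈ Set.Icc δ (1 - δ) := by
  have hp : (0 : ℝ) < p := Nat.cast_pos.mpr (NeZero.pos p)
  obtain ⟨m, hm⟩ := (ZMod.intCast_eq_intCast_iff_dvd_sub y z p).mp hyz.symm
  have hdiv : (z : ℝ) / p = y / p + m := by
    rw [eq_add_of_sub_eq hm]
    push_cast
    field_simp
    ring
  have habs : |(y : ℝ) / p| = |(y : ℝ)| / p := by rw [abs_div, abs_of_pos hp]
  rw [hdiv, Int.fract_add_intCast]
  apply fract_mem_Icc_of_le_abs <;> rw [habs]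
  · rwa [le_div_iff₀ hp]
  · rw [div_le_iff₀ hp]
    linarith

theorem exists_le_mem_Icc_of_lt_imp_succ_le {R : Type*} [LinearOrder R] {a : ℕ → R} {r s : R}
    {n : ℕ} (h0 : a 0 ≤ s) (hstep : ∀ m, a m < r → a (m + 1) ≤ s) (hn : r ≤ a n) :
    ∃ m ≤ n, a m ∈ Set.Icc r s := by
  induction n with
  | zero => exact ⟨0, le_rfl, hn, h0⟩
  | succ n ih =>
    rcases lt_or_ge (a n) r with hlt | hge
    · exact ⟨n + 1, le_rfl, hn, hstep n hlt⟩
    · obtain ⟨m, hm, hmem⟩ := ih hge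
      exact ⟨m, hm.trans n.le_succ, hmem⟩

theorem norm_valMinAbs_le {ι : Type*} [Fintype ι] {p : ℕ} [NeZero p] (β : ι → ZMod p) :
    ‖fun i ↦ (β i).valMinAbs‖ ≤ (p : ℝ) / 2 := by
  rw [pi_norm_le_iff_of_nonneg (by positivity)]
  intro i
  have hle : (β i).valMinAbs.natAbs * 2 ≤ p := by
    have := ZMod.natAbs_valMinAbs_le (β i)
    omega
  rw [Int.norm_eq_abs, ← Int.cast_abs, Int.abs_eq_natAbs, le_div_iff₀ two_pos]
  exact_mod_cast hle

theorem one_add_mul_natLog_le_mul_log (c : ℕ) {p : ℕ} (hp : 2 < p) :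
    ((1 + c * (Nat.log 2 p + 2) : ℕ) : ℝ) ≤ (1 + 4 * c) * Real.log p := by
  have hlog : 1 ≤ Real.log p := by
    rw [Real.le_log_iff_exp_le (by positivity)]
    have : (3 : ℝ) ≤ p := by exact_mod_cast hp
    linarith [Real.exp_one_lt_d9]
  have hnatLog : (Nat.log 2 p : ℝ) ≤ 2 * Real.log p := calc
    (Nat.log 2 p : ℝ) ≤ Real.log p / Real.log 2 := Real.natLog_le_logb p 2
    _ ≤ 2 * Real.log p := by
      rw [div_le_iff₀ (Real.log_pos one_lt_two)]
      nlinarith [Real.log_two_gt_d9]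
  have hc : (c : ℝ) * (Nat.log 2 p + 2) ≤ c * (4 * Real.log p) := by
    gcongr
    linarith
  push_cast
  linarith

theorem intCast_mulVec_apply {R m n : Type*} [Ring R] [Fintype n] (B : Matrix m n ℤ) (v : n → ℤ)
    (i : m) :
    (((B *ᵥ v) i : ℤ) : R) = (B.map (Int.castRingHom R) *ᵥ fun j ↦ (v j : R)) i :=
  (Int.castRingHom R).map_mulVec B v i

variable {ι : Type*} [Fintype ι] [DecidableEq ι]

theorem map_intCast_mulVec_ne_zero {p : ℕ} {B : Matrix ι ι ℤ} (hB : IsCoprime B.det p)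
    {α : ι → ZMod p} (hα : α ≠ 0) : B.map (Int.castRingHom (ZMod p)) *ᵥ α ≠ 0 := by
  have hdet : IsUnit (B.map (Int.castRingHom (ZMod p))).det := by
    have hcast : (B.map (Int.castRingHom (ZMod p))).det = (B.det : ZMod p) :=
      ((Int.castRingHom (ZMod p)).map_det B).symm
    rw [hcast, ZMod.coe_int_isUnit_iff_isCoprime]
    exact hB.symm
  have hinj := mulVec_injective_of_isUnit ((isUnit_iff_isUnit_det _).mpr hdet)
  exact fun h ↦ hα (hinj (h.trans (mulVec_zero _).symm))

open scoped Matrix.Norms.Operator in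
theorem exists_fract_pow_mulVec_mem_Icc {p : ℕ} [NeZero p] {B : Matrix ι ι ℤ}
    (hB : IsCoprime B.det p) {δ : ℝ} (hδ : ‖B‖ * δ ≤ 1 / 2) {L : ℕ}
    (hgrowth : ∀ w : ι → ℤ, w ≠ 0 → ∃ n ≤ L, δ * p ≤ ‖B ^ n *ᵥ w‖)
    {α : ι → ZMod p} (hα : α ≠ 0) {x : ι → ℤ} (hx : ∀ i, (x i : ZMod p) = α i) :
    ∃ j, 1 ≤ j ∧ j ≤ 1 + L ∧
      ∃ i, Int.fract (((B ^ j *ᵥ x) i : ℝ) / p) ∈ Set.Icc δ (1 - δ) := by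
  let β := B.map (Int.castRingHom (ZMod p)) *ᵥ α
  let w : ι → ℤ := fun i ↦ (β i).valMinAbs
  have hw : w ≠ 0 := fun h ↦ map_intCast_mulVec_ne_zero hB hα
    (funext fun i ↦ (ZMod.valMinAbs_eq_zero _).mp (congrFun h i))
  obtain ⟨n, hnL, hn⟩ := hgrowth w hw
  have hstep : ∀ m, ‖B ^ m *ᵥ w‖ < δ * p → ‖B ^ (m + 1) *ᵥ w‖ ≤ p / 2 := fun m hm ↦ calc
    ‖B ^ (m + 1) *ᵥ w‖ = ‖B *ᵥ B ^ m *ᵥ w‖ := by rw [pow_succ', mulVec_mulVec]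
    _ ≤ ‖B‖ * (δ * p) := (linfty_opNorm_mulVec _ _).trans (by gcongr)
    _ = ‖B‖ * δ * p := (mul_assoc _ _ _).symm
    _ ≤ 1 / 2 * p := by gcongr
    _ = p / 2 := one_div_mul_eq_div _ _
  obtain ⟨m, hmn, hlow, hhigh⟩ := exists_le_mem_Icc_of_lt_imp_succ_le
    (a := fun m ↦ ‖B ^ m *ᵥ w‖) (by simpa using norm_valMinAbs_le β) hstep hn
  have : Nonempty ι := (Function.ne_iff.mp hα).nonempty
  obtain ⟨i, hi⟩ := Finite.exists_max fun i ↦ ‖(B ^ m *ᵥ w) i‖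
  refine ⟨m + 1, by omega, by omega, i, fract_div_mem_Icc_of_intCast_eq ?_
    (hlow.trans ((pi_norm_le_iff_of_nonempty _).mpr hi)) ((norm_le_pi_norm _ i).trans hhigh)⟩
  have hlift : (fun j ↦ (((B *ᵥ x) j : ℤ) : ZMod p)) = fun j ↦ (w j : ZMod p) := funext fun j ↦ by
    rw [intCast_mulVec_apply, funext hx, ZMod.coe_valMinAbs]
  rw [pow_succ, ← mulVec_mulVec, intCast_mulVec_apply, hlift, intCast_mulVec_apply]

end Residues

open scoped Matrix.Norms.Operator in
theorem lemma_3_3_general {ι : Type*} [Fintype ι] [DecidableEq ι] (A : Matrix ι ι ℤ)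
    (hA : A.det ≠ 0)
    (hroot : ∀ z : ℂ, (A.map (Int.cast : ℤ → ℂ)).charpoly.IsRoot z → ¬ IsOfFinOrder z) :
    ∃ (δ cbar : ℝ) (N : ℕ), 0 < δ ∧ δ < 1 / 2 ∧ 0 < cbar ∧
      ∀ p : ℕ, N < p → Int.gcd A.det p = 1 →
        ∀ α : ι → ZMod p, α ≠ 0 →
          ∃ jb : ℕ, 1 ≤ jb ∧ (jb : ℝ) ≤ cbar * Real.log p ∧
            ∃ i : ι,
              Int.fract ((((Aᵀ ^ jb).mulVec (fun l => ((α l).val : ℤ)) i : ℤ) : ℝ) / p)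
                ∈ Set.Icc δ (1 - δ) := by
  have hroot_transpose : ∀ z : ℂ, Polynomial.aeval z Aᵀ.charpoly = 0 → ¬ IsOfFinOrder z :=
    fun z hz ↦ hroot z (isRoot_charpoly_map_intCast_iff.mpr (charpoly_transpose A ▸ hz))
  obtain ⟨c, hc⟩ := exists_two_pow_le_norm_pow_mulVec (by rwa [det_transpose]) hroot_transpose
  have hK : 0 ≤ ‖Aᵀ‖ := norm_nonneg _
  refine ⟨1 / (2 * ‖Aᵀ‖ + 3), 1 + 4 * c, 2, by positivity, ?_, by positivity, ?_⟩
  · exact one_div_lt_one_div_of_lt two_pos (by linarith)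
  intro p hp hgcd α hα
  have : NeZero p := ⟨by omega⟩
  have hδ : ‖Aᵀ‖ * (1 / (2 * ‖Aᵀ‖ + 3)) ≤ 1 / 2 := by
    rw [mul_one_div, div_le_iff₀ (by positivity)]
    linarith
  have hp2 : 1 / (2 * ‖Aᵀ‖ + 3) * p ≤ 2 ^ (Nat.log 2 p + 1) := calc
    1 / (2 * ‖Aᵀ‖ + 3) * p ≤ 1 * p := by
      gcongr
      exact div_le_one_of_le₀ (by linarith) (by positivity)
    _ ≤ 2 ^ (Nat.log 2 p + 1) := by
      rw [one_mul]
      exact_mod_cast (Nat.lt_pow_succ_log_self one_lt_two p).le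
  obtain ⟨j, hj1, hjL, i, hi⟩ := exists_fract_pow_mulVec_mem_Icc
    (by rwa [det_transpose, Int.isCoprime_iff_gcd_eq_one]) hδ
    (fun w hw ↦ (hc w hw (Nat.log 2 p + 1)).imp fun n hn ↦ ⟨hn.1, hp2.trans hn.2⟩) hα
    (x := fun l ↦ ((α l).val : ℤ)) (fun l ↦ by simp)
  exact ⟨j, hj1, (Nat.cast_le.mpr hjL).trans (one_add_mul_natLog_le_mul_log c hp), i, hi⟩

/-- **Lemma 3.3**: if all complex eigenvalues `λ` of the integer matrix `A` are nonzero
with `|λ| ≠ 1`, then there are `δ ∈ (0, 1/2)`, `c̄ > 0` and `N ∈ ℕ` such that for every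
`p > N` with `gcd(det A, p) = 1` and every `α ∈ (ℤ/pℤ)^k ∖ {0}` there is a positive
integer `j̄ ≤ c̄ ln p` such that the vector of fractional parts of `ᵗA^{j̄} α / p` has a
component in `[δ, 1−δ]`. -/
theorem lemma_3_3 (k : ℕ) (hk : 1 ≤ k)
    (A : Matrix (Fin k) (Fin k) ℤ) (hA : A.det ≠ 0)
    (hEig : ∀ lam : ℂ, (A.map (Int.cast : ℤ → ℂ)).charpoly.IsRoot lam →
      lam ≠ 0 ∧ ‖lam‖ ≠ 1) :
    ∃ (δ cbar : ℝ) (N : ℕ), 0 < δ ∧ δ < 1 / 2 ∧ 0 < cbar ∧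
      ∀ p : ℕ, N < p → Int.gcd A.det p = 1 →
        ∀ α : Fin k → ZMod p, α ≠ 0 →
          ∃ jb : ℕ, 1 ≤ jb ∧ (jb : ℝ) ≤ cbar * Real.log p ∧
            ∃ i : Fin k,
              Int.fract ((((Aᵀ ^ jb).mulVec (fun l => ((α l).val : ℤ)) i : ℤ) : ℝ) / p)
                ∈ Set.Icc δ (1 - δ) :=
  lemma_3_3_general A hA fun lam hlam hfin => (hEig lam hlam).2 hfin.norm_eq_one
end
end

section
/- Let M be a k×k integer matrix, let d ≥ 2 and σ_1, …, σ_d be positive integers with σ = max_i σ_i, let p be a positive integer, and let y, α ∈ ℤ^k. For r, s ∈ ℕ define ξ_{r,s} = ⟨y, M^r · ∏_{i=1}^{s}(M − σ_i I) · α⟩ / p, and set L = [1/(2^d σ^{d+1}), 1 − 1/(2^d σ^{d+1})]. Suppose that for some j ≥ 1 and some e with 1 ≤ e ≤ d−1, the fractional parts of ξ_{j,0}, ξ_{j+1,0}, …, ξ_{j+e−1,0} all lie outside L. Then for every s ∈ {0, 1, …, e−1} and every r ∈ {j, j+1, …, j+e−s−1}, ξ_{r,s} lies in [−1/(2^{d−s}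 σ^{d−s+1}), 1/(2^{d−s} σ^{d−s+1})] modulo ℤ; in particular, ξ_{j+e−s−1, s} lies in [−1/(2^{d−s} σ³), 1/(2^{d−s} σ³)] modulo ℤ. -/
open scoped BigOperators
open Matrix

noncomputable section

/-- `∏_{i=1}^{s} (M − σ_i I)` (here `σ_i = σ (i-1)`). -/
def prodM {k : ℕ} (M : Matrix (Fin k) (Fin k) ℤ) (σ : ℕ → ℕ) (s : ℕ) :
    Matrix (Fin k) (Fin k) ℤ :=
  ((List.range s).map (fun i => M - (σ i : ℤ) • (1 : Matrix (Fin k) (Fin k) ℤ))).prod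

/-- `ξ_{r,s} = ⟨y, M^r ∏_{i=1}^{s}(M − σ_i I) α⟩ / p`. -/
def xiRS {k : ℕ} (M : Matrix (Fin k) (Fin k) ℤ) (σ : ℕ → ℕ) (p : ℕ)
    (y α : Fin k → ℤ) (r s : ℕ) : ℝ :=
  ((∑ l, y l * ((M ^ r * prodM M σ s).mulVec α) l : ℤ) : ℝ) / p

/-!
Modulo `ℤ` the numbers `ξ_{r,s}` live in the circle `ℝ/ℤ`, where `‖x‖` is the distance from `x` to
the nearest integer. Since `M` commutes with each `M − σ_i I`, they satisfy the recurrence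
`ξ_{r,s+1} = ξ_{r+1,s} − σ_{s+1} ξ_{r,s}`. Passing from `s` to `s + 1` therefore loses at most a
factor `1 + σ_{s+1} ≤ 2S` in this norm, while the range of admissible `r` shrinks by one. After `s`
steps the initial radius `1 / (2^d S^{d+1})` has grown by a factor of at most `(2S)^s`.
-/

lemma norm_coe_unitAddCircle_le_iff {x ε : ℝ} :
    ‖(x : UnitAddCircle)‖ ≤ ε ↔ ∃ m : ℤ, x - m ∈ Set.Icc (-ε) ε := by
  simp only [UnitAddCircle.norm_eq, Set.mem_Icc, ← abs_le]
  exact ⟨fun h => ⟨round x, h⟩, fun ⟨m, hm⟩ => (round_le x m).trans hm⟩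

lemma norm_coe_unitAddCircle_le_of_fract_notMem_Icc {x ε : ℝ}
    (hx : Int.fract x ∉ Set.Icc ε (1 - ε)) : ‖(x : UnitAddCircle)‖ ≤ ε := by
  rw [UnitAddCircle.norm_eq, abs_sub_round_eq_min, min_le_iff]
  by_contra! h
  exact hx ⟨h.1.le, by linarith [h.2]⟩

lemma norm_le_prod_mul_of_recurrence {E : Type*} [SeminormedAddCommGroup E] {ξ : ℕ → ℕ → E}
    {σ : ℕ → ℤ} (hξ : ∀ r s, ξ r (s + 1) = ξ (r + 1) s - σ s • ξ r s) {j n : ℕ} {ε : ℝ}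
    (h₀ : ∀ r, j ≤ r → r < n → ‖ξ r 0‖ ≤ ε) {r s : ℕ} (hjr : j ≤ r) (hrs : r + s < n) :
    ‖ξ r s‖ ≤ (∏ i ∈ Finset.range s, (1 + |(σ i : ℝ)|)) * ε := by
  induction s generalizing r with
  | zero => simpa using h₀ r hjr hrs
  | succ s ih =>
    set P := ∏ i ∈ Finset.range s, (1 + |(σ i : ℝ)|)
    have h_next : ‖ξ (r + 1) s‖ ≤ P * ε := ih (by omega) (by omega)
    have h_same : ‖ξ r s‖ ≤ P * ε := ih hjr (by omega)
    calc ‖ξ r (s + 1)‖ ≤ ‖ξ (r + 1) s‖ + ‖σ s • ξ r s‖ := by rw [hξ]; exact norm_sub_le _ _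
      _ ≤ ‖ξ (r + 1) s‖ + |(σ s : ℝ)| * ‖ξ r s‖ := by gcongr; exact norm_zsmul_le _ _
      _ ≤ P * ε + |(σ s : ℝ)| * (P * ε) := by gcongr
      _ = (∏ i ∈ Finset.range (s + 1), (1 + |(σ i : ℝ)|)) * ε := by
        rw [Finset.prod_range_succ]; ring

lemma prod_one_add_abs_le_two_mul_pow {σ : ℕ → ℤ} {S : ℝ} (hS : 1 ≤ S) {s : ℕ}
    (hσ : ∀ i < s, |(σ i : ℝ)| ≤ S) :
    ∏ i ∈ Finset.range s, (1 + |(σ i : ℝ)|) ≤ (2 * S) ^ s :=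
  calc ∏ i ∈ Finset.range s, (1 + |(σ i : ℝ)|) ≤ ∏ _i ∈ Finset.range s, 2 * S :=
        Finset.prod_le_prod (fun _ _ => by positivity)
          fun i hi => by linarith [hσ i (Finset.mem_range.1 hi)]
    _ = (2 * S) ^ s := by simp

lemma two_mul_pow_mul_one_div {S : ℝ} (hS : S ≠ 0) {s d : ℕ} (hsd : s ≤ d) :
    (2 * S) ^ s * (1 / (2 ^ d * S ^ (d + 1))) = 1 / (2 ^ (d - s) * S ^ (d - s + 1)) := by
  obtain ⟨t, rfl⟩ := Nat.exists_eq_add_of_le hsd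
  rw [Nat.add_sub_cancel_left]
  field_simp
  ring

theorem lemma_3_5_general {ξ : ℕ → ℕ → ℝ} {σ : ℕ → ℤ}
    (hξ : ∀ r s, ξ r (s + 1) = ξ (r + 1) s - σ s * ξ r s) {d : ℕ} {S : ℝ} (hS : 1 ≤ S)
    (hσ : ∀ i < d, |(σ i : ℝ)| ≤ S) {j e : ℕ} (hed : e < d)
    (hout : ∀ m < e, Int.fract (ξ (j + m) 0) ∉
      Set.Icc (1 / (2 ^ d * S ^ (d + 1))) (1 - 1 / (2 ^ d * S ^ (d + 1)))) :
    ∀ s < e,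
      (∀ r : ℕ, j ≤ r → r + s + 1 ≤ j + e →
        ∃ m : ℤ, ξ r s - m ∈
          Set.Icc (-(1 / (2 ^ (d - s) * S ^ (d - s + 1)))) (1 / (2 ^ (d - s) * S ^ (d - s + 1)))) ∧
      ∃ m : ℤ, ξ (j + e - s - 1) s - m ∈
        Set.Icc (-(1 / (2 ^ (d - s) * S ^ 3))) (1 / (2 ^ (d - s) * S ^ 3)) := by
  intro s hs
  simp only [← norm_coe_unitAddCircle_le_iff]
  have h_init : ∀ r, j ≤ r → r < j + e →
      ‖(ξ r 0 : UnitAddCircle)‖ ≤ 1 / (2 ^ d * S ^ (d + 1)) := by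
    intro r hjr hre
    obtain ⟨m, rfl⟩ := Nat.exists_eq_add_of_le hjr
    exact norm_coe_unitAddCircle_le_of_fract_notMem_Icc (hout m (by omega))
  have h_rec : ∀ r s, (ξ r (s + 1) : UnitAddCircle) = ξ (r + 1) s - σ s • (ξ r s : UnitAddCircle) :=
    fun r s => by rw [hξ, ← zsmul_eq_mul, AddCircle.coe_sub, AddCircle.coe_zsmul]
  have h_bound : ∀ r, j ≤ r → r + s + 1 ≤ j + e →
      ‖(ξ r s : UnitAddCircle)‖ ≤ 1 / (2 ^ (d - s) * S ^ (d - s + 1)) := by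
    intro r hjr hre
    calc ‖(ξ r s : UnitAddCircle)‖
        ≤ (∏ i ∈ Finset.range s, (1 + |(σ i : ℝ)|)) * (1 / (2 ^ d * S ^ (d + 1))) :=
          norm_le_prod_mul_of_recurrence (ξ := fun r s => (ξ r s : UnitAddCircle))
            h_rec h_init hjr hre
      _ ≤ (2 * S) ^ s * (1 / (2 ^ d * S ^ (d + 1))) := by
        gcongr
        exact prod_one_add_abs_le_two_mul_pow hS fun i hi => hσ i (by omega)
      _ = 1 / (2 ^ (d - s) * S ^ (d - s + 1)) :=
        two_mul_pow_mul_one_div (by positivity) (by omega)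
  refine ⟨h_bound, (h_bound _ (by omega) (by omega)).trans ?_⟩
  gcongr
  omega

section Matrix

variable {k : ℕ} (M : Matrix (Fin k) (Fin k) ℤ) (σ : ℕ → ℕ)

lemma prodM_succ (s : ℕ) : prodM M σ (s + 1) = prodM M σ s * (M - (σ s : ℤ) • 1) := by
  simp [prodM, List.range_succ]

lemma commute_prodM (s : ℕ) : Commute M (prodM M σ s) := by
  refine Commute.list_prod_right _ _ fun A hA => ?_
  obtain ⟨i, -, rfl⟩ := List.mem_map.1 hA
  exact (Commute.refl M).sub_right ((Commute.one_right M).smul_right _)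

lemma pow_mul_prodM_succ (r s : ℕ) :
    M ^ r * prodM M σ (s + 1) = M ^ (r + 1) * prodM M σ s - (σ s : ℤ) • (M ^ r * prodM M σ s) := by
  rw [prodM_succ, mul_sub, ← (commute_prodM M σ s).eq, mul_sub, ← mul_assoc, ← pow_succ,
    mul_smul_comm, mul_smul_comm, mul_one]

lemma xiRS_eq_dotProduct_div (p : ℕ) (y α : Fin k → ℤ) (r s : ℕ) :
    xiRS M σ p y α r s = ((y ⬝ᵥ (M ^ r * prodM M σ s) *ᵥ α : ℤ) : ℝ) / p :=
  rfl

lemma xiRS_succ_right (p : ℕ) (y α : Fin k → ℤ) (r s : ℕ) :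
    xiRS M σ p y α r (s + 1) = xiRS M σ p y α (r + 1) s - σ s * xiRS M σ p y α r s := by
  simp only [xiRS_eq_dotProduct_div, pow_mul_prodM_succ, sub_mulVec, smul_mulVec, dotProduct_sub,
    dotProduct_smul, smul_eq_mul, Int.cast_sub, Int.cast_mul, Int.cast_natCast]
  ring

end Matrix

/-- **Lemma 3.5**: let `S = max_i σ_i` and
`L = [1/(2^d S^{d+1}), 1 − 1/(2^d S^{d+1})]`.  If the fractional parts of
`ξ_{j,0}, …, ξ_{j+e−1,0}` all lie outside `L` (with `j ≥ 1`, `1 ≤ e ≤ d−1`), then for all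
`s ∈ {0,…,e−1}` and `r ∈ {j,…,j+e−s−1}`, `ξ_{r,s}` lies in
`[−1/(2^{d−s} S^{d−s+1}), 1/(2^{d−s} S^{d−s+1})]` modulo `ℤ`; in particular
`ξ_{j+e−s−1,s}` lies in `[−1/(2^{d−s} S³), 1/(2^{d−s} S³)]` modulo `ℤ`. -/
theorem lemma_3_5 (k d : ℕ) (hd : 2 ≤ d)
    (M : Matrix (Fin k) (Fin k) ℤ)
    (σ : ℕ → ℕ) (hσ : ∀ i < d, 0 < σ i)
    (S : ℕ) (hS : S = (Finset.range d).sup σ)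
    (p : ℕ) (hp : 0 < p) (y α : Fin k → ℤ)
    (j e : ℕ) (hj : 1 ≤ j) (he1 : 1 ≤ e) (he2 : e ≤ d - 1)
    (hout : ∀ m < e, Int.fract (xiRS M σ p y α (j + m) 0) ∉
      Set.Icc (1 / ((2 : ℝ) ^ d * (S : ℝ) ^ (d + 1)))
        (1 - 1 / ((2 : ℝ) ^ d * (S : ℝ) ^ (d + 1)))) :
    ∀ s < e,
      (∀ r : ℕ, j ≤ r → r + s + 1 ≤ j + e →
        ∃ mz : ℤ, xiRS M σ p y α r s - mz ∈
          Set.Icc (-(1 / ((2 : ℝ) ^ (d - s) * (S : ℝ) ^ (d - s + 1))))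
            (1 / ((2 : ℝ) ^ (d - s) * (S : ℝ) ^ (d - s + 1)))) ∧
      ∃ mz : ℤ, xiRS M σ p y α (j + e - s - 1) s - mz ∈
        Set.Icc (-(1 / ((2 : ℝ) ^ (d - s) * (S : ℝ) ^ 3)))
          (1 / ((2 : ℝ) ^ (d - s) * (S : ℝ) ^ 3)) := by
  have hσS : ∀ i < d, σ i ≤ S := fun i hi => hS ▸ Finset.le_sup (Finset.mem_range.2 hi)
  exact lemma_3_5_general (σ := fun i => (σ i : ℤ)) (by simp [xiRS_succ_right])
    (by exact_mod_cast (hσ 0 (by omega)).trans_le (hσS 0 (by omega)))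
    (fun i hi => by simpa using hσS i hi) (by omega) hout
end
end
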